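/- arXiv:2109.13401 — 3 statements merged into one kernel-verified Lean document; each statement's English description precedes it below -/
import Mathlib

section
/- For m = 3 marked vertices on any graph G, writing A_1 = B_1 = Φ_{(1,2,2)}, A_2 = B_2 = Φ_{(1,2,1)}, A_3 = B_3 = Φ_{(1,1,2)}, the identity Φ_{(1,1,1)} · Φ_{(1,2,3)} = A_1 B_3 + A_2 B_3 + A_2 B_1 holds, where Φ_{(1,1,1)} is the spanning tree polynomial and Φ_{(1,2,3)} is the polynomial of spanning forests separating the three marked vertices. -/
open Finset

/-- A finite edge set `F` is a spanning forest of `G` compatible with the set partition of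
(a subset of) the marked vertices `v : Fin m → V` encoded by `p : Fin m → Option ℕ`
(`p i = none` means vertex `i` is unconstrained, `p i = some ℓ` means vertex `i` lies in
the part labelled `ℓ`): the edges of `F` lie in `G`, `F` is acyclic, two constrained
marked vertices lie in the same tree iff they have the same label, and every vertex of
the graph lies in the tree of some constrained marked vertex (so the trees of the forest
are in bijection with the parts of the partition). -/
def IsCompatibleForest {V : Type*} [Fintype V] [DecidableEq V] (G : SimpleGraph V) {m : ℕ}
    (v : Fin m → V) (p : Fin m → Option ℕ) (F : Finset (Sym2 V)) : Prop :=
  (F : Set (Sym2 V)) ⊆ G.edgeSet ∧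
  (SimpleGraph.fromEdgeSet (F : Set (Sym2 V))).IsAcyclic ∧
  (∀ i j : Fin m, p i ≠ none → p j ≠ none →
    ((SimpleGraph.fromEdgeSet (F : Set (Sym2 V))).Reachable (v i) (v j) ↔ p i = p j)) ∧
  (∀ w : V, ∃ i : Fin m, p i ≠ none ∧
    (SimpleGraph.fromEdgeSet (F : Set (Sym2 V))).Reachable w (v i))

/-- The spanning forest polynomial `Φ_P = Σ_{F ∼ P} Π_{e ∉ F} x_e` of the graph `G` with
edge variables `x`, marked vertices `v`, and partition `P` encoded by `p`. -/
noncomputable def forestPoly {V : Type*} [Fintype V] [DecidableEq V] {R : Type*}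
    [CommRing R] (G : SimpleGraph V) [DecidableRel G.Adj] (x : Sym2 V → R) {m : ℕ}
    (v : Fin m → V) (p : Fin m → Option ℕ) : R :=
  ∑ F ∈ G.edgeFinset.powerset,
    (letI := Classical.dec (IsCompatibleForest G v p F)
     if IsCompatibleForest G v p F then ∏ e ∈ G.edgeFinset \ F, x e else 0)

namespace DodgsonForest

set_option linter.unusedSectionVars false

/-- `F` is a spanning forest of the complete graph whose trees each contain exactly one
element of `S`. -/
def RF {V : Type*} (S : Finset V) (F : Finset (Sym2 V)) : Prop :=
  (∀ e ∈ F, ¬ e.IsDiag) ∧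
  (SimpleGraph.fromEdgeSet (F : Set (Sym2 V))).IsAcyclic ∧
  (∀ s ∈ S, ∀ t ∈ S, (SimpleGraph.fromEdgeSet (F : Set (Sym2 V))).Reachable s t → s = t) ∧
  (∀ w : V, ∃ s ∈ S, (SimpleGraph.fromEdgeSet (F : Set (Sym2 V))).Reachable w s)

/-- `g` fixes the roots and every vertex eventually reaches a root. -/
def AF {V : Type*} (S : Finset V) (g : V → V) : Prop :=
  (∀ s ∈ S, g s = s) ∧ ∀ u, ∃ n, g^[n] u ∈ S

/-- Edge set of a parent function. -/
def edgesOf {V : Type*} [Fintype V] [DecidableEq V] (S : Finset V) (g : V → V) :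
    Finset (Sym2 V) := (Finset.univ \ S).image (fun u => s(u, g u))

section
variable {V : Type*} [Fintype V] [DecidableEq V] {S : Finset V} {g : V → V}

theorem mem_edgesOf {e : Sym2 V} : e ∈ edgesOf S g ↔ ∃ u, u ∉ S ∧ s(u, g u) = e := by
  simp [edgesOf]

theorem AF.stay (h : AF S g) {u : V} (hu : u ∈ S) (n : ℕ) : g^[n] u = u :=
  Function.iterate_fixed (h.1 u hu) n

theorem AF.no_cycle (h : AF S g) {u : V} (hu : u ∉ S) (n : ℕ) : g^[n] (g u) ≠ u := by
  intro hn
  rw [← Function.iterate_succ_apply] at hn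
  obtain ⟨m, hm⟩ := h.2 u
  have h1 : g^[(n+1)*m] u = u := by
    rw [Function.iterate_mul]
    exact Function.iterate_fixed hn m
  have h2 : g^[(n+1)*m] u = g^[m] u := by
    have : (n+1)*m = n*m + m := by ring
    rw [this, Function.iterate_add_apply, h.stay hm]
  rw [h1] at h2
  exact hu (h2 ▸ hm)

theorem AF.adj_iff (h : AF S g) {a b : V} :
    (SimpleGraph.fromEdgeSet (edgesOf S g : Set (Sym2 V))).Adj a b ↔
      (a ∉ S ∧ g a = b) ∨ (b ∉ S ∧ g b = a) := by
  rw [SimpleGraph.fromEdgeSet_adj, Finset.mem_coe, mem_edgesOf]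
  constructor
  · rintro ⟨⟨u, hu, he⟩, -⟩
    rw [Sym2.eq_iff] at he
    rcases he with ⟨rfl, rfl⟩ | ⟨rfl, rfl⟩
    · exact Or.inl ⟨hu, rfl⟩
    · exact Or.inr ⟨hu, rfl⟩
  · rintro (⟨ha, rfl⟩ | ⟨hb, rfl⟩)
    · exact ⟨⟨a, ha, rfl⟩, fun e => h.no_cycle ha 0 e.symm⟩
    · exact ⟨⟨b, hb, Sym2.eq_swap⟩, fun e => h.no_cycle hb 0 e⟩

theorem reach_inv {G : SimpleGraph V} {P : V → Prop}
    (h : ∀ a b, G.Adj a b → P a → P b) {a b : V} (hr : G.Reachable a b) (ha : P a) : P b := by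
  obtain ⟨p⟩ := hr
  induction p with
  | nil => exact ha
  | cons hadj _ ih => exact ih (h _ _ hadj ha)

theorem AF.reach_iterate (h : AF S g) (u : V) (n : ℕ) :
    (SimpleGraph.fromEdgeSet (edgesOf S g : Set (Sym2 V))).Reachable u (g^[n] u) := by
  induction n generalizing u with
  | zero => exact SimpleGraph.Reachable.refl _
  | succ n ih =>
    rw [Function.iterate_succ_apply]
    by_cases hu : u ∈ S
    · rw [h.1 u hu]; exact ih u
    · exact (SimpleGraph.Adj.reachable (h.adj_iff.2 (Or.inl ⟨hu, rfl⟩))).trans (ih _)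

theorem AF.rf (h : AF S g) : RF S (edgesOf S g) := by
  refine ⟨?_, ?_, ?_, ?_⟩
  · intro e he
    obtain ⟨u, hu, rfl⟩ := mem_edgesOf.1 he
    intro hd
    exact h.no_cycle hu 0 (Sym2.mk_isDiag_iff.1 hd).symm
  · rw [SimpleGraph.isAcyclic_iff_forall_adj_isBridge]
    have key : ∀ u, u ∉ S → (SimpleGraph.fromEdgeSet (edgesOf S g : Set (Sym2 V))).IsBridge
        s(u, g u) := by
      intro u hu
      rw [SimpleGraph.isBridge_iff]
      intro hr
      have := reach_inv (P := fun w => ∃ n, g^[n] w = u) ?_ hr ⟨0, rfl⟩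
      · obtain ⟨n, hn⟩ := this
        exact h.no_cycle hu n hn
      · rintro a b hab ⟨n, hn⟩
        rw [SimpleGraph.deleteEdges_adj] at hab
        obtain ⟨hab, hne⟩ := hab
        rcases h.adj_iff.1 hab with ⟨ha, rfl⟩ | ⟨hb, rfl⟩
        · cases n with
          | zero => simp at hn; subst hn; simp at hne
          | succ n => exact ⟨n, hn⟩
        · exact ⟨n+1, hn⟩
    intro a b hab
    rcases h.adj_iff.1 hab with ⟨ha, rfl⟩ | ⟨hb, rfl⟩
    · exact key a ha
    · rw [Sym2.eq_swap]; exact key b hb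
  · intro s hs t ht hr
    have := reach_inv (P := fun w => ∃ n, g^[n] w = s) ?_ hr ⟨0, rfl⟩
    · obtain ⟨n, hn⟩ := this
      rw [h.stay ht] at hn; exact hn.symm
    · rintro a b hab ⟨n, hn⟩
      rcases h.adj_iff.1 hab with ⟨ha, rfl⟩ | ⟨hb, rfl⟩
      · cases n with
        | zero => simp at hn; subst hn; exact absurd hs ha
        | succ n => exact ⟨n, hn⟩
      · exact ⟨n+1, hn⟩
  · intro w
    obtain ⟨n, hn⟩ := h.2 w
    exact ⟨_, hn, h.reach_iterate w n⟩

theorem AF.edge_inj (h : AF S g) {u w : V} (hu : u ∉ S)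
    (he : s(u, g u) = s(w, g w)) : u = w := by
  rw [Sym2.eq_iff] at he
  rcases he with ⟨h1, -⟩ | ⟨h1, h2⟩
  · exact h1
  · exact absurd (by rw [h2]; exact h1.symm) (h.no_cycle hu 1)

theorem AF.inj {g' : V → V} (h : AF S g) (h' : AF S g') (he : edgesOf S g = edgesOf S g') :
    g = g' := by
  have key : ∀ n u, g^[n] u ∈ S → g u = g' u := by
    intro n
    induction n with
    | zero => intro u hu; rw [h.1 u hu, h'.1 u hu]
    | succ n ih =>
      intro u hn
      by_cases hu : u ∈ S
      · rw [h.1 u hu, h'.1 u hu]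
      have hm : s(u, g u) ∈ edgesOf S g' := he ▸ mem_edgesOf.2 ⟨u, hu, rfl⟩
      obtain ⟨w, hw, hwe⟩ := mem_edgesOf.1 hm
      rw [Sym2.eq_iff] at hwe
      rcases hwe with ⟨rfl, h2⟩ | ⟨rfl, h2⟩
      · exact h2.symm
      · have := ih _ hn
        rw [h2] at this
        exact absurd this (h.no_cycle hu 1)
  funext u
  obtain ⟨n, hn⟩ := h.2 u
  exact key n u hn

theorem RF.exists_af {F : Finset (Sym2 V)} (hF : RF S F) : ∃ g, AF S g ∧ edgesOf S g = F := by
  obtain ⟨hd, hac, hsep, hcov⟩ := hF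
  set H := SimpleGraph.fromEdgeSet (F : Set (Sym2 V)) with hH
  have hex : ∀ w, ∃ n, ∃ s ∈ S, ∃ p : H.Walk w s, p.length = n := by
    intro w
    obtain ⟨s, hs, ⟨p⟩⟩ := hcov w
    exact ⟨_, s, hs, p, rfl⟩
  classical
  let d : V → ℕ := fun w => Nat.find (hex w)
  have hstep : ∀ u, ∃ w, (u ∈ S → w = u) ∧ (u ∉ S → H.Adj u w ∧ d w < d u) := by
    intro u
    by_cases hu : u ∈ S
    · exact ⟨u, fun _ => rfl, fun h => absurd hu h⟩
    · obtain ⟨s, hs, p, hp⟩ := Nat.find_spec (hex u)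
      cases p with
      | nil => exact absurd hs hu
      | cons hadj q =>
        refine ⟨_, fun h => absurd h hu, fun _ => ⟨hadj, ?_⟩⟩
        have h1 : d _ ≤ q.length := Nat.find_min' (hex _) ⟨s, hs, q, rfl⟩
        rw [SimpleGraph.Walk.length_cons] at hp
        have : d u = q.length + 1 := hp.symm
        omega
  choose g hg1 hg2 using hstep
  have haf : AF S g := by
    refine ⟨hg1, ?_⟩
    have : ∀ n u, d u ≤ n → ∃ n, g^[n] u ∈ S := by
      intro n
      induction n with
      | zero =>
        intro u hu
        by_cases hS : u ∈ S
        · exact ⟨0, hS⟩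
        · have := (hg2 u hS).2; omega
      | succ n ih =>
        intro u hu
        by_cases hS : u ∈ S
        · exact ⟨0, hS⟩
        · have := (hg2 u hS).2
          obtain ⟨m, hm⟩ := ih (g u) (by omega)
          exact ⟨m+1, hm⟩
    exact fun u => this _ u le_rfl
  have hsub : edgesOf S g ⊆ F := by
    intro e he
    obtain ⟨u, hu, rfl⟩ := mem_edgesOf.1 he
    have := (hg2 u hu).1
    rw [hH, SimpleGraph.fromEdgeSet_adj] at this
    exact this.1
  refine ⟨g, haf, hsub.antisymm ?_⟩
  intro e he
  by_contra hne
  induction e with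
  | _ a b =>
  have hab : H.Adj a b := by
    rw [hH, SimpleGraph.fromEdgeSet_adj]
    exact ⟨he, fun h => hd _ he (Sym2.mk_isDiag_iff.2 h)⟩
  have hbr := SimpleGraph.isAcyclic_iff_forall_adj_isBridge.1 hac hab
  rw [SimpleGraph.isBridge_iff] at hbr
  apply hbr
  have hle : SimpleGraph.fromEdgeSet (edgesOf S g : Set (Sym2 V)) ≤ H.deleteEdges {s(a, b)} := by
    intro x y hxy
    rw [SimpleGraph.fromEdgeSet_adj] at hxy
    rw [SimpleGraph.deleteEdges_adj, hH, SimpleGraph.fromEdgeSet_adj]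
    refine ⟨⟨hsub hxy.1, hxy.2⟩, ?_⟩
    intro hx
    rw [Set.mem_singleton_iff] at hx
    exact hne (hx ▸ hxy.1)
  obtain ⟨n, hn⟩ := haf.2 a
  obtain ⟨m, hm⟩ := haf.2 b
  have ra := (haf.reach_iterate a n).mono hle
  have rb := (haf.reach_iterate b m).mono hle
  have hle2 : H.deleteEdges {s(a, b)} ≤ H := SimpleGraph.deleteEdges_le _
  have heq := hsep _ hn _ hm
    (((ra.mono hle2).symm.trans hab.reachable).trans (rb.mono hle2))
  rw [heq] at ra
  exact ra.trans rb.symm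

open Classical in
theorem sum_rf_eq {R : Type*} [CommRing R] (y : Sym2 V → R) (S : Finset V) :
    ∑ F : Finset (Sym2 V) with RF S F, ∏ e ∈ F, y e =
      ∑ g : V → V with AF S g, ∏ u ∈ Finset.univ \ S, y s(u, g u) := by
  symm
  refine Finset.sum_bij (fun g _ => edgesOf S g) ?_ ?_ ?_ ?_
  · intro g hg
    rw [Finset.mem_filter] at hg ⊢
    exact ⟨Finset.mem_univ _, hg.2.rf⟩
  · intro g hg g' hg' he
    rw [Finset.mem_filter] at hg hg'
    exact hg.2.inj hg'.2 he
  · intro F hF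
    rw [Finset.mem_filter] at hF
    obtain ⟨g, hg, he⟩ := hF.2.exists_af
    exact ⟨g, by simpa using hg, he⟩
  · intro g hg
    rw [Finset.mem_filter] at hg
    rw [edgesOf, Finset.prod_image]
    intro u hu w _ he
    exact hg.2.edge_inj (by simpa using hu) he

end
section
variable {V : Type*} [Fintype V] [DecidableEq V] {R : Type*} [CommRing R]

/-- Weighted Laplacian. -/
def lap (y : Sym2 V → R) : Matrix V V R :=
  Matrix.of fun i j => (if i = j then ∑ w, y s(i, w) else 0) - y s(i, j)

/-- Laplacian with the rows in `S` replaced by unit rows. -/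
def lapS (y : Sym2 V → R) (S : Finset V) : Matrix V V R :=
  Matrix.of fun i j => if i ∈ S then (if i = j then 1 else 0) else lap y i j

/-- The matrix of a single parent function. -/
def funMat (R : Type*) [CommRing R] (S : Finset V) (g : V → V) : Matrix V V R :=
  Matrix.of fun i j => (if i = j then 1 else 0) - (if i ∉ S ∧ g i = j then 1 else 0)

theorem det_funMat_of_af {S : Finset V} {g : V → V} (h : AF S g) : (funMat R S g).det = 1 := by
  classical
  let d : V → ℕ := fun u => Nat.find (h.2 u)
  have hd : ∀ u, u ∉ S → d (g u) < d u := by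
    intro u hu
    have h1 : g^[d u] u ∈ S := Nat.find_spec (h.2 u)
    rcases hk : d u with _ | k
    · rw [hk] at h1; exact absurd h1 hu
    · rw [hk] at h1
      have : d (g u) ≤ k := Nat.find_min' (h.2 (g u)) h1
      omega
  rw [← Matrix.det_transpose]
  have hb : (funMat R S g).transpose.BlockTriangular d := by
    intro i j hij
    simp only [Matrix.transpose_apply, funMat, Matrix.of_apply]
    rw [if_neg (by rintro rfl; omega), if_neg, sub_zero]
    rintro ⟨hj, rfl⟩
    have := hd j hj
    omega
  rw [hb.det]
  apply Finset.prod_eq_one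
  intro k _
  suffices h1 : (funMat R S g).transpose.toSquareBlock d k = 1 by rw [h1, Matrix.det_one]
  ext ⟨i, hi⟩ ⟨j, hj⟩
  simp only [Matrix.toSquareBlock_def, Matrix.transpose_apply, funMat, Matrix.of_apply,
    Matrix.one_apply, Subtype.mk.injEq]
  rw [if_neg (c := _ ∧ _), sub_zero]
  · simp [eq_comm]
  · rintro ⟨hjS, rfl⟩
    have := hd j hjS
    omega

theorem det_funMat_of_not_af [IsDomain R] {S : Finset V} {g : V → V} (hS : ∀ s ∈ S, g s = s)
    (h : ¬ AF S g) : (funMat R S g).det = 0 := by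
  classical
  have : ∃ u, ∀ n, g^[n] u ∉ S := by
    by_contra hc
    push Not at hc
    exact h ⟨hS, hc⟩
  obtain ⟨u, hu⟩ := this
  rw [← Matrix.exists_mulVec_eq_zero_iff]
  refine ⟨fun w => if ∀ n, g^[n] w ∉ S then 1 else 0, ?_, ?_⟩
  · intro h0
    have := congrFun h0 u
    simp [hu] at this
  · funext i
    simp only [Matrix.mulVec, dotProduct, funMat, Matrix.of_apply, sub_mul, Finset.sum_sub_distrib,
      ite_mul, one_mul, zero_mul, Finset.sum_ite_eq, Finset.mem_univ, if_true, Pi.zero_apply]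
    by_cases hi : i ∈ S
    · simp only [hi, not_true_eq_false, false_and, if_false, Finset.sum_const_zero, sub_zero]
      rw [if_neg]
      intro hn
      exact hn 0 hi
    · simp only [hi, not_false_eq_true, true_and, Finset.sum_ite_eq, Finset.mem_univ, if_true]
      rw [sub_eq_zero]
      congr 1
      apply propext
      constructor
      · intro hn n; exact hn (n+1)
      · intro hn n
        cases n with
        | zero => exact hi
        | succ n => exact hn n

open Classical in
theorem det_lapS [IsDomain R] (y : Sym2 V → R) (S : Finset V) :
    (lapS y S).det = ∑ F : Finset (Sym2 V) with RF S F, ∏ e ∈ F, y e := by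
  rw [sum_rf_eq]
  have hrow : lapS y S = fun i => ∑ w ∈ (if i ∈ S then {i} else Finset.univ : Finset V),
      (if i ∈ S then 1 else y s(i, w)) •
        (fun j => (if i = j then 1 else 0) - (if i ∉ S ∧ w = j then 1 else 0) : V → R) := by
    funext i j
    rw [Finset.sum_apply]
    by_cases hi : i ∈ S
    · simp [lapS, hi]
    · simp [lapS, lap, hi, mul_sub, Finset.sum_sub_distrib]
  have hdet : (lapS y S).det = Matrix.detRowAlternating.toMultilinearMap (lapS y S) := rfl
  rw [hdet, hrow, MultilinearMap.map_sum_finset]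
  rw [← Finset.sum_subset (s₁ := Finset.univ.filter (AF S))]
  · apply Finset.sum_congr rfl
    intro g hg
    rw [Finset.mem_filter] at hg
    rw [MultilinearMap.map_smul_univ]
    have : Matrix.detRowAlternating.toMultilinearMap (fun i j => (if i = j then 1 else 0) - (if i ∉ S ∧ g i = j then 1 else 0) : V → V → R) = (funMat R S g).det := rfl
    rw [this, det_funMat_of_af hg.2, smul_eq_mul, mul_one, Finset.prod_ite, Finset.prod_const_one, one_mul]
    apply Finset.prod_congr _ (fun _ _ => rfl)
    ext; simp
  · intro g hg
    rw [Finset.mem_filter] at hg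
    rw [Fintype.mem_piFinset]
    intro a
    by_cases ha : a ∈ S
    · simp [ha, hg.2.1 a ha]
    · simp [ha]
  · intro g hg hn
    rw [Fintype.mem_piFinset] at hg
    rw [MultilinearMap.map_smul_univ]
    have : Matrix.detRowAlternating.toMultilinearMap (fun i j => (if i = j then 1 else 0) - (if i ∉ S ∧ g i = j then 1 else 0) : V → V → R) = (funMat R S g).det := rfl
    rw [this, det_funMat_of_not_af, smul_zero]
    · intro s hs
      have := hg s
      simpa [hs] using this
    · simpa using hn

theorem det_lapS_eq_minor (y : Sym2 V → R) (S : Finset V) :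
    (lapS y S).det = ((lap y).submatrix (Subtype.val : {v // v ∉ S} → V) Subtype.val).det := by
  rw [Matrix.twoBlockTriangular_det' _ (fun i => i ∈ S)]
  · have h1 : (lapS y S).toSquareBlockProp (fun i => i ∈ S) = 1 := by
      ext ⟨i, hi⟩ ⟨j, hj⟩
      simp [Matrix.toSquareBlockProp_def, lapS, Matrix.one_apply]
    have h1' : ∀ inst : Fintype {a // a ∈ S}, @Matrix.det _ _ inst _ _
        ((lapS y S).toSquareBlockProp (fun i => i ∈ S)) = 1 := by
      intro inst
      rw [h1]
      exact @Matrix.det_one _ _ inst _ _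
    have h2 : (lapS y S).toSquareBlockProp (fun i => ¬ i ∈ S) =
        (lap y).submatrix (Subtype.val : {v // v ∉ S} → V) Subtype.val := by
      ext ⟨i, hi⟩ ⟨j, hj⟩
      simp [Matrix.toSquareBlockProp_def, lapS, hi]
    rw [h1', h2, one_mul]
  · intro i hi j hj
    simp only [lapS, Matrix.of_apply, hi, if_true]
    rw [if_neg]
    rintro rfl; exact hj hi

theorem lap_symm (y : Sym2 V → R) (i j : V) : lap y i j = lap y j i := by
  simp only [lap, Matrix.of_apply]
  rw [Sym2.eq_swap]
  by_cases h : i = j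
  · subst h; rfl
  · rw [if_neg h, if_neg (Ne.symm h)]

theorem lap_row (y : Sym2 V → R) (i : V) : ∑ j, lap y i j = 0 := by
  simp [lap, Finset.sum_sub_distrib]

end
section
variable {V : Type*} [Fintype V] [DecidableEq V] {K : Type*} [Field K]

/-- Interior block. -/
def intr (L : Matrix V V K) (S : Finset V) : Matrix {v // v ∉ S} {v // v ∉ S} K :=
  L.submatrix Subtype.val Subtype.val

/-- Schur complement on all of `V`. -/
noncomputable def schur (L : Matrix V V K) (S : Finset V) : Matrix V V K :=
  L - L.submatrix id (Subtype.val : {v // v ∉ S} → V) * (intr L S)⁻¹ *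
    L.submatrix (Subtype.val : {v // v ∉ S} → V) id

theorem det_minor_schur (L : Matrix V V K) (S0 S : Finset V) (hD : (intr L S0).det ≠ 0)
    {k : ℕ} (g : Fin k → V) (hg : Function.Injective g)
    (hS : ∀ v, v ∉ S ↔ v ∉ S0 ∨ ∃ i, g i = v) (hg0 : ∀ i, g i ∈ S0) :
    (intr L S).det = (intr L S0).det * ((schur L S0).submatrix g g).det := by
  let φ : Fin k ⊕ {v // v ∉ S0} → {v // v ∉ S} :=
    Sum.elim (fun i => ⟨g i, (hS _).2 (Or.inr ⟨i, rfl⟩)⟩) (fun u => ⟨u.1, (hS _).2 (Or.inl u.2)⟩)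
  have hφ : Function.Bijective φ := by
    constructor
    · rintro (i | u) (j | w) h
      · simp only [φ, Sum.elim_inl, Subtype.mk.injEq] at h
        rw [hg h]
      · simp only [φ, Sum.elim_inl, Sum.elim_inr, Subtype.mk.injEq] at h
        exact absurd (h ▸ hg0 i) w.2
      · simp only [φ, Sum.elim_inl, Sum.elim_inr, Subtype.mk.injEq] at h
        exact absurd (h ▸ hg0 j) u.2
      · simp only [φ, Sum.elim_inr, Subtype.mk.injEq] at h
        rw [Subtype.ext h]
    · rintro ⟨v, hv⟩
      rcases (hS v).1 hv with h | ⟨i, rfl⟩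
      · exact ⟨Sum.inr ⟨v, h⟩, rfl⟩
      · exact ⟨Sum.inl i, rfl⟩
  rw [← Matrix.det_submatrix_equiv_self (Equiv.ofBijective φ hφ) (intr L S)]
  have hM : (intr L S).submatrix (Equiv.ofBijective φ hφ) (Equiv.ofBijective φ hφ) =
      Matrix.fromBlocks (L.submatrix g g) (L.submatrix g Subtype.val) (L.submatrix Subtype.val g)
        (intr L S0) := by
    ext (i | u) (j | w) <;> rfl
  have : Invertible (intr L S0) := Matrix.invertibleOfIsUnitDet _ (isUnit_iff_ne_zero.2 hD)
  rw [hM, Matrix.det_fromBlocks₂₂, Matrix.invOf_eq_nonsing_inv]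
  rfl

theorem schur_symm (L : Matrix V V K) (hL : L.transpose = L) (S : Finset V) (i j : V) :
    schur L S i j = schur L S j i := by
  have : (schur L S).transpose = schur L S := by
    have h1 : (intr L S).transpose = intr L S := by
      rw [intr, Matrix.transpose_submatrix, hL]
    rw [schur, Matrix.transpose_sub, Matrix.transpose_mul, Matrix.transpose_mul,
      Matrix.transpose_nonsing_inv, h1, Matrix.transpose_submatrix, Matrix.transpose_submatrix, hL,
      Matrix.mul_assoc]
  exact (congrFun (congrFun this i) j).symm

theorem schur_row (L : Matrix V V K) (hL : ∀ i, ∑ j, L i j = 0) (S : Finset V) (i : V) :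
    ∑ j, schur L S i j = 0 := by
  have h1 : L.mulVec 1 = 0 := by
    funext i; simpa [Matrix.mulVec, dotProduct] using hL i
  have h2 : (L.submatrix (Subtype.val : {v // v ∉ S} → V) id).mulVec 1 = 0 := by
    funext i; simpa [Matrix.mulVec, dotProduct] using hL i
  have h3 : (schur L S).mulVec 1 = 0 := by
    rw [schur, Matrix.sub_mulVec, ← Matrix.mulVec_mulVec, h1, h2, Matrix.mulVec_zero, sub_zero]
  have := congrFun h3 i
  simpa [Matrix.mulVec, dotProduct] using this

theorem schur_interior (L : Matrix V V K) (S : Finset V) (hD : (intr L S).det ≠ 0) (i u : V)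
    (hu : u ∉ S) : schur L S i u = 0 := by
  have h : (schur L S).submatrix id (Subtype.val : {v // v ∉ S} → V) = 0 := by
    have h2 : (schur L S).submatrix id (Subtype.val : {v // v ∉ S} → V) =
      L.submatrix id (Subtype.val : {v // v ∉ S} → V) -
        L.submatrix id (Subtype.val : {v // v ∉ S} → V) * (intr L S)⁻¹ * intr L S := rfl
    rw [h2, Matrix.mul_assoc, Matrix.nonsing_inv_mul _ (isUnit_iff_ne_zero.2 hD), Matrix.mul_one,
      sub_self]
  exact congrFun (congrFun h i) ⟨u, hu⟩

/-- The linear algebra identity. -/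
theorem det_identity (L : Matrix V V K) (hs : L.transpose = L) (hr : ∀ i, ∑ j, L i j = 0)
    (v : Fin 3 → V) (hv : Function.Injective v)
    (hD : (intr L {v 0, v 1, v 2}).det ≠ 0) :
    ∃ a b c : K,
      (intr L {v 0, v 1}).det = (intr L {v 0, v 1, v 2}).det * (a + b) ∧
      (intr L {v 0, v 2}).det = (intr L {v 0, v 1, v 2}).det * (a + c) ∧
      (intr L {v 1, v 2}).det = (intr L {v 0, v 1, v 2}).det * (b + c) ∧
      (intr L {v 0}).det = (intr L {v 0, v 1, v 2}).det * (a * b + b * c + c * a) := by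
  have n01 : v 0 ≠ v 1 := hv.ne (by decide)
  have n02 : v 0 ≠ v 2 := hv.ne (by decide)
  have n12 : v 1 ≠ v 2 := hv.ne (by decide)
  set S0 : Finset V := {v 0, v 1, v 2} with hS0
  set Q := schur L S0 with hQ
  have row : ∀ i, Q i (v 0) + Q i (v 1) + Q i (v 2) = 0 := by
    intro i
    have h := schur_row L hr S0 i
    rw [← Finset.sum_subset (Finset.subset_univ S0)
      (fun u _ hu => schur_interior L S0 hD i u hu)] at h
    rw [hS0, Finset.sum_insert (by simp [n01, n02]), Finset.sum_insert (by simp [n12]),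
      Finset.sum_singleton] at h
    rw [← h]; ring
  have sym : ∀ i j, Q i j = Q j i := schur_symm L hs S0
  have one : ∀ (k : Fin 3) (S : Finset V), (∀ x, x ∉ S ↔ x ∉ S0 ∨ v k = x) →
      (intr L S).det = (intr L S0).det * Q (v k) (v k) := by
    intro k S h
    rw [det_minor_schur L S0 S hD (fun _ : Fin 1 => v k) (Function.injective_of_subsingleton _)
      (fun x => by simpa using h x) (fun _ => by fin_cases k <;> simp [hS0])]
    simp [hQ]
  have two := det_minor_schur L S0 {v 0} hD ![v 1, v 2]
    (by intro i j; fin_cases i <;> fin_cases j <;> simp [n12, n12.symm])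
    (by
      intro x
      simp only [Fin.exists_fin_two, hS0, Finset.mem_insert, Finset.mem_singleton]
      simp only [Matrix.cons_val_zero, Matrix.cons_val_one]
      grind)
    (by intro i; fin_cases i <;> simp [hS0])
  refine ⟨-Q (v 1) (v 2), -Q (v 0) (v 2), -Q (v 0) (v 1), ?_, ?_, ?_, ?_⟩
  · rw [one 2 _ (by intro x; simp only [hS0, Finset.mem_insert, Finset.mem_singleton]; grind)]
    congr 1
    linear_combination row (v 2) - sym (v 2) (v 0) - sym (v 2) (v 1)
  · rw [one 1 _ (by intro x; simp only [hS0, Finset.mem_insert, Finset.mem_singleton]; grind)]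
    congr 1
    linear_combination row (v 1) - sym (v 1) (v 0)
  · rw [one 0 _ (by intro x; simp only [hS0, Finset.mem_insert, Finset.mem_singleton]; grind)]
    congr 1
    linear_combination row (v 0)
  · rw [two]
    congr 1
    rw [Matrix.det_fin_two]
    simp only [Matrix.submatrix_apply, Matrix.cons_val_zero, Matrix.cons_val_one]
    have e1 : Q (v 1) (v 1) = - Q (v 0) (v 1) - Q (v 1) (v 2) := by
      linear_combination row (v 1) - sym (v 1) (v 0)
    have e2 : Q (v 2) (v 2) = - Q (v 0) (v 2) - Q (v 1) (v 2) := by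
      linear_combination row (v 2) - sym (v 2) (v 0) - sym (v 2) (v 1)
    rw [← hQ, e1, e2, sym (v 2) (v 1)]
    ring

end
section
variable {V : Type*} [Fintype V] [DecidableEq V]

theorem compat_iff (v : Fin 3 → V) (a b c : ℕ) (F : Finset (Sym2 V)) :
    IsCompatibleForest ⊤ v ![some a, some b, some c] F ↔
      (∀ e ∈ F, ¬ e.IsDiag) ∧
      (SimpleGraph.fromEdgeSet (F : Set (Sym2 V))).IsAcyclic ∧
      (((SimpleGraph.fromEdgeSet (F : Set (Sym2 V))).Reachable (v 0) (v 1) ↔ a = b) ∧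
      ((SimpleGraph.fromEdgeSet (F : Set (Sym2 V))).Reachable (v 0) (v 2) ↔ a = c) ∧
      ((SimpleGraph.fromEdgeSet (F : Set (Sym2 V))).Reachable (v 1) (v 2) ↔ b = c)) ∧
      (∀ w : V, (SimpleGraph.fromEdgeSet (F : Set (Sym2 V))).Reachable w (v 0) ∨
        (SimpleGraph.fromEdgeSet (F : Set (Sym2 V))).Reachable w (v 1) ∨
        (SimpleGraph.fromEdgeSet (F : Set (Sym2 V))).Reachable w (v 2)) := by
  have h0 : (F : Set (Sym2 V)) ⊆ (⊤ : SimpleGraph V).edgeSet ↔ ∀ e ∈ F, ¬ e.IsDiag := by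
    rw [SimpleGraph.edgeSet_top]
    rfl
  have h1 := SimpleGraph.reachable_comm (G := SimpleGraph.fromEdgeSet (F : Set (Sym2 V)))
    (u := v 1) (v := v 0)
  have h2 := SimpleGraph.reachable_comm (G := SimpleGraph.fromEdgeSet (F : Set (Sym2 V)))
    (u := v 2) (v := v 0)
  have h3 := SimpleGraph.reachable_comm (G := SimpleGraph.fromEdgeSet (F : Set (Sym2 V)))
    (u := v 2) (v := v 1)
  rw [IsCompatibleForest, h0]
  refine and_congr_right fun _ => and_congr_right fun _ => and_congr ?_ ?_
  · simp [Fin.forall_fin_succ]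
    rw [h1, h2, h3]
    grind
  · simp [Fin.exists_fin_succ]

theorem rf_one (v : Fin 3 → V) (F : Finset (Sym2 V)) :
    RF {v 0} F ↔ IsCompatibleForest ⊤ v ![some 1, some 1, some 1] F := by
  rw [compat_iff, RF]
  refine and_congr_right fun _ => and_congr_right fun _ => ?_
  generalize hH : SimpleGraph.fromEdgeSet (F : Set (Sym2 V)) = H
  have ht : ∀ a b c, H.Reachable a b → H.Reachable b c → H.Reachable a c :=
    fun a b c => SimpleGraph.Reachable.trans
  have hsy : ∀ a b, H.Reachable a b → H.Reachable b a := fun a b => SimpleGraph.Reachable.symm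
  simp only [Finset.mem_singleton, forall_eq, exists_eq_left]
  grind

theorem rf_three (v : Fin 3 → V) (hv : Function.Injective v) (F : Finset (Sym2 V)) :
    RF {v 0, v 1, v 2} F ↔ IsCompatibleForest ⊤ v ![some 1, some 2, some 3] F := by
  have n01 : v 0 ≠ v 1 := hv.ne (by decide)
  have n02 : v 0 ≠ v 2 := hv.ne (by decide)
  have n12 : v 1 ≠ v 2 := hv.ne (by decide)
  rw [compat_iff, RF]
  refine and_congr_right fun _ => and_congr_right fun _ => ?_
  generalize hH : SimpleGraph.fromEdgeSet (F : Set (Sym2 V)) = H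
  have hsy : ∀ a b, H.Reachable a b → H.Reachable b a := fun a b => SimpleGraph.Reachable.symm
  simp only [Finset.mem_insert, Finset.mem_singleton, forall_eq_or_imp, exists_eq_or_imp, forall_eq,
    exists_eq_left]
  grind

theorem rf_two (v : Fin 3 → V) (hv : Function.Injective v) (F : Finset (Sym2 V)) :
    (RF {v 0, v 1} F ↔ IsCompatibleForest ⊤ v ![some 1, some 2, some 2] F ∨
      IsCompatibleForest ⊤ v ![some 1, some 2, some 1] F) ∧
    (RF {v 0, v 2} F ↔ IsCompatibleForest ⊤ v ![some 1, some 2, some 2] F ∨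
      IsCompatibleForest ⊤ v ![some 1, some 1, some 2] F) ∧
    (RF {v 1, v 2} F ↔ IsCompatibleForest ⊤ v ![some 1, some 2, some 1] F ∨
      IsCompatibleForest ⊤ v ![some 1, some 1, some 2] F) := by
  have n01 : v 0 ≠ v 1 := hv.ne (by decide)
  have n02 : v 0 ≠ v 2 := hv.ne (by decide)
  have n12 : v 1 ≠ v 2 := hv.ne (by decide)
  simp only [compat_iff, RF]
  generalize hH : SimpleGraph.fromEdgeSet (F : Set (Sym2 V)) = H
  have ht : ∀ a b c, H.Reachable a b → H.Reachable b c → H.Reachable a c :=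
    fun a b c => SimpleGraph.Reachable.trans
  have hsy : ∀ a b, H.Reachable a b → H.Reachable b a := fun a b => SimpleGraph.Reachable.symm
  have hrf : ∀ a, H.Reachable a a := fun a => SimpleGraph.Reachable.refl a
  simp only [← and_or_left]
  refine ⟨and_congr_right fun _ => and_congr_right fun _ => ?_,
    and_congr_right fun _ => and_congr_right fun _ => ?_,
    and_congr_right fun _ => and_congr_right fun _ => ?_⟩ <;>
  · simp only [Finset.mem_insert, Finset.mem_singleton, forall_eq_or_imp, exists_eq_or_imp,
      forall_eq, exists_eq_left]
    grind

theorem compat_excl (v : Fin 3 → V) (F : Finset (Sym2 V)) :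
    ¬ (IsCompatibleForest ⊤ v ![some 1, some 2, some 2] F ∧
      IsCompatibleForest ⊤ v ![some 1, some 2, some 1] F) ∧
    ¬ (IsCompatibleForest ⊤ v ![some 1, some 2, some 2] F ∧
      IsCompatibleForest ⊤ v ![some 1, some 1, some 2] F) ∧
    ¬ (IsCompatibleForest ⊤ v ![some 1, some 2, some 1] F ∧
      IsCompatibleForest ⊤ v ![some 1, some 1, some 2] F) := by
  simp only [compat_iff]
  grind

open Classical in
/-- Forest polynomial of the complete graph, in the variables of the forest edges. -/
noncomputable def psi {R : Type*} [CommRing R] (y : Sym2 V → R) (v : Fin 3 → V)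
    (p : Fin 3 → Option ℕ) : R :=
  ∑ F : Finset (Sym2 V) with IsCompatibleForest ⊤ v p F, ∏ e ∈ F, y e

theorem psi_map {R R' : Type*} [CommRing R] [CommRing R'] (f : R →+* R') (y : Sym2 V → R)
    (v : Fin 3 → V) (p : Fin 3 → Option ℕ) : f (psi y v p) = psi (fun e => f (y e)) v p := by
  simp [psi]

theorem psi_identity_field {K : Type*} [Field K] (h2 : (2 : K) ≠ 0) (y : Sym2 V → K)
    (v : Fin 3 → V) (hv : Function.Injective v)
    (hD : (intr (lap y) {v 0, v 1, v 2}).det ≠ 0) :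
    psi y v ![some 1, some 1, some 1] * psi y v ![some 1, some 2, some 3] =
      psi y v ![some 1, some 2, some 2] * psi y v ![some 1, some 1, some 2] +
        psi y v ![some 1, some 2, some 1] * psi y v ![some 1, some 1, some 2] +
          psi y v ![some 1, some 2, some 1] * psi y v ![some 1, some 2, some 2] := by
  classical
  obtain ⟨a, b, c, h01, h02, h12, h0⟩ := det_identity (lap y)
    (by ext i j; exact lap_symm y j i) (lap_row y) v hv hD
  have key : ∀ S : Finset V, (intr (lap y) S).det =
      ∑ F : Finset (Sym2 V) with RF S F, ∏ e ∈ F, y e := by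
    intro S
    rw [← det_lapS, det_lapS_eq_minor]; rfl
  have e1 : psi y v ![some 1, some 1, some 1] = (intr (lap y) {v 0}).det := by
    rw [key, psi]; simp only [rf_one]
  have e3 : psi y v ![some 1, some 2, some 3] = (intr (lap y) {v 0, v 1, v 2}).det := by
    rw [key, psi]; simp only [rf_three v hv]
  have e01 : psi y v ![some 1, some 2, some 2] + psi y v ![some 1, some 2, some 1] =
      (intr (lap y) {v 0, v 1}).det := by
    rw [key, psi, psi, ← Finset.sum_union]
    · rw [← Finset.filter_or]; simp only [(rf_two v hv _).1]
    · exact Finset.disjoint_filter.2 fun F _ h h' => (compat_excl v F).1 ⟨h, h'⟩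
  have e02 : psi y v ![some 1, some 2, some 2] + psi y v ![some 1, some 1, some 2] =
      (intr (lap y) {v 0, v 2}).det := by
    rw [key, psi, psi, ← Finset.sum_union]
    · rw [← Finset.filter_or]; simp only [(rf_two v hv _).2.1]
    · exact Finset.disjoint_filter.2 fun F _ h h' => (compat_excl v F).2.1 ⟨h, h'⟩
  have e12 : psi y v ![some 1, some 2, some 1] + psi y v ![some 1, some 1, some 2] =
      (intr (lap y) {v 1, v 2}).det := by
    rw [key, psi, psi, ← Finset.sum_union]
    · rw [← Finset.filter_or]; simp only [(rf_two v hv _).2.2]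
    · exact Finset.disjoint_filter.2 fun F _ h h' => (compat_excl v F).2.2 ⟨h, h'⟩
  rw [h01] at e01
  rw [h02] at e02
  rw [h12] at e12
  rw [h0] at e1
  generalize (intr (lap y) {v 0, v 1, v 2}).det = D at *
  have f1 : psi y v ![some 1, some 2, some 2] = D * a := by
    apply mul_left_cancel₀ h2
    linear_combination e01 + e02 - e12
  have f2 : psi y v ![some 1, some 2, some 1] = D * b := by
    apply mul_left_cancel₀ h2
    linear_combination e01 + e12 - e02
  have f3 : psi y v ![some 1, some 1, some 2] = D * c := by
    apply mul_left_cancel₀ h2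
    linear_combination e02 + e12 - e01
  rw [e1, e3, f1, f2, f3]
  ring

theorem intr_map {R R' : Type*} [CommRing R] [CommRing R'] (f : R →+* R') (y : Sym2 V → R)
    (S : Finset V) :
    f ((lap y).submatrix (Subtype.val : {v // v ∉ S} → V) Subtype.val).det =
      ((lap fun e => f (y e)).submatrix (Subtype.val : {v // v ∉ S} → V) Subtype.val).det := by
  rw [RingHom.map_det]
  congr 1
  ext i j
  simp only [RingHom.mapMatrix_apply, Matrix.map_apply, Matrix.submatrix_apply, lap,
    Matrix.of_apply, map_sub]
  congr 1
  split_ifs <;> simp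

theorem generic_ne_zero (v : Fin 3 → V) :
    ((lap (MvPolynomial.X : Sym2 V → MvPolynomial (Sym2 V) ℤ)).submatrix
      (Subtype.val : {w // w ∉ ({v 0, v 1, v 2} : Finset V)} → V) Subtype.val).det ≠ 0 := by
  intro h
  have h' := congrArg (MvPolynomial.eval (fun e : Sym2 V => if v 0 ∈ e then (1 : ℤ) else 0)) h
  rw [intr_map, map_zero] at h'
  refine one_ne_zero (α := ℤ) ?_
  rw [← h', ← Matrix.det_one (n := {w // w ∉ ({v 0, v 1, v 2} : Finset V)})]
  congr 1
  ext ⟨i, hi⟩ ⟨j, hj⟩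
  simp only [Finset.mem_insert, Finset.mem_singleton, not_or] at hi hj
  have hi' : v 0 ≠ i := Ne.symm hi.1
  have hj' : v 0 ≠ j := Ne.symm hj.1
  simp [lap, Matrix.one_apply, hi', hj', Finset.filter_eq]

theorem psi_identity {R : Type*} [CommRing R] (y : Sym2 V → R)
    (v : Fin 3 → V) (hv : Function.Injective v) :
    psi y v ![some 1, some 1, some 1] * psi y v ![some 1, some 2, some 3] =
      psi y v ![some 1, some 2, some 2] * psi y v ![some 1, some 1, some 2] +
        psi y v ![some 1, some 2, some 1] * psi y v ![some 1, some 1, some 2] +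
          psi y v ![some 1, some 2, some 1] * psi y v ![some 1, some 2, some 2] := by
  let P := MvPolynomial (Sym2 V) ℤ
  let ι : P →+* FractionRing P := algebraMap P (FractionRing P)
  have hι : Function.Injective ι := IsFractionRing.injective P (FractionRing P)
  have hgen := psi_identity_field (K := FractionRing P)
    (by
      have : ι 2 ≠ ι 0 := hι.ne two_ne_zero
      simpa using this)
    (fun e => ι (MvPolynomial.X e)) v hv
    (by
      have := hι.ne (generic_ne_zero v)
      rw [intr_map, map_zero] at this
      exact this)
  simp only [← psi_map, ← map_mul, ← map_add] at hgen
  have h2 := congrArg (MvPolynomial.eval₂Hom (Int.castRingHom R) y) (hι hgen)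
  simp only [map_mul, map_add, psi_map] at h2
  simpa using h2

theorem forestPoly_map {R R' : Type*} [CommRing R] [CommRing R'] (f : R →+* R')
    (G : SimpleGraph V) [DecidableRel G.Adj] (x : Sym2 V → R)
    (v : Fin 3 → V) (p : Fin 3 → Option ℕ) :
    f (forestPoly G x v p) = forestPoly G (fun e => f (x e)) v p := by
  simp only [forestPoly, map_sum]
  apply Finset.sum_congr rfl
  intro F _
  split_ifs <;> simp

theorem forestPoly_eq_psi {K : Type*} [Field K] (G : SimpleGraph V) [DecidableRel G.Adj]
    (x : Sym2 V → K) (hx : ∀ e, x e ≠ 0) (v : Fin 3 → V) (p : Fin 3 → Option ℕ) :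
    forestPoly G x v p = (∏ e ∈ G.edgeFinset, x e) *
      psi (fun e => if e ∈ G.edgeFinset then (x e)⁻¹ else 0) v p := by
  classical
  rw [forestPoly, psi, Finset.sum_filter, Finset.mul_sum]
  rw [← Finset.sum_subset (Finset.subset_univ G.edgeFinset.powerset)]
  · apply Finset.sum_congr rfl
    intro F hF
    rw [Finset.mem_powerset] at hF
    have hiff : IsCompatibleForest G v p F ↔ IsCompatibleForest ⊤ v p F := by
      have h1 : (F : Set (Sym2 V)) ⊆ G.edgeSet := by
        intro e he
        exact SimpleGraph.mem_edgeFinset.1 (hF he)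
      have h2 : (F : Set (Sym2 V)) ⊆ (⊤ : SimpleGraph V).edgeSet :=
        h1.trans (SimpleGraph.edgeSet_mono le_top)
      simp only [IsCompatibleForest, h1, h2]
    by_cases hc : IsCompatibleForest ⊤ v p F
    · rw [if_pos (hiff.2 hc), if_pos hc, ← Finset.prod_sdiff hF, mul_assoc,
        ← Finset.prod_mul_distrib]
      rw [Finset.prod_eq_one (s := F), mul_one]
      intro e he
      rw [if_pos (hF he), mul_inv_cancel₀ (hx e)]
    · rw [if_neg (fun h => hc (hiff.1 h)), if_neg hc, mul_zero]
  · intro F _ hF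
    rw [Finset.mem_powerset, Finset.not_subset] at hF
    obtain ⟨e, he, hne⟩ := hF
    split_ifs
    · rw [Finset.prod_eq_zero he (if_neg hne), mul_zero]
    · rw [mul_zero]

end

end DodgsonForest

/-- **The Dodgson identity as a spanning forest identity** (`m = 3` marked vertices, the
identity `𝓛_{3,1}(1)`): for any graph `G` with three distinct marked vertices,
`Φ_{(1,1,1)} Φ_{(1,2,3)} = A₁B₃ + A₂B₃ + A₂B₁`, where
`A₁ = B₁ = Φ_{(1,2,2)}`, `A₂ = B₂ = Φ_{(1,2,1)}`, `A₃ = B₃ = Φ_{(1,1,2)}`. -/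
theorem dodgson_forest_identity {V : Type*} [Fintype V] [DecidableEq V] {R : Type*}
    [CommRing R] (G : SimpleGraph V) [DecidableRel G.Adj] (x : Sym2 V → R)
    (v : Fin 3 → V) (hv : Function.Injective v) :
    let Φ : (Fin 3 → Option ℕ) → R := fun p => forestPoly G x v p
    Φ ![some 1, some 1, some 1] * Φ ![some 1, some 2, some 3] =
      Φ ![some 1, some 2, some 2] * Φ ![some 1, some 1, some 2] +
        Φ ![some 1, some 2, some 1] * Φ ![some 1, some 1, some 2] +
          Φ ![some 1, some 2, some 1] * Φ ![some 1, some 2, some 2] := by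
  intro Φ
  let P := MvPolynomial (Sym2 V) ℤ
  let ι : P →+* FractionRing P := algebraMap P (FractionRing P)
  have hι : Function.Injective ι := IsFractionRing.injective P (FractionRing P)
  have hx : ∀ e : Sym2 V, ι (MvPolynomial.X e) ≠ 0 := by
    intro e
    have := hι.ne (MvPolynomial.X_ne_zero (R := ℤ) e)
    rwa [map_zero] at this
  have hgen : forestPoly G (fun e => ι (MvPolynomial.X e)) v ![some 1, some 1, some 1] *
      forestPoly G (fun e => ι (MvPolynomial.X e)) v ![some 1, some 2, some 3] =
      forestPoly G (fun e => ι (MvPolynomial.X e)) v ![some 1, some 2, some 2] *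
        forestPoly G (fun e => ι (MvPolynomial.X e)) v ![some 1, some 1, some 2] +
      forestPoly G (fun e => ι (MvPolynomial.X e)) v ![some 1, some 2, some 1] *
        forestPoly G (fun e => ι (MvPolynomial.X e)) v ![some 1, some 1, some 2] +
      forestPoly G (fun e => ι (MvPolynomial.X e)) v ![some 1, some 2, some 1] *
        forestPoly G (fun e => ι (MvPolynomial.X e)) v ![some 1, some 2, some 2] := by
    simp only [DodgsonForest.forestPoly_eq_psi G _ hx]
    linear_combination (∏ e ∈ G.edgeFinset, ι (MvPolynomial.X e)) ^ 2 *
      DodgsonForest.psi_identity (fun e => if e ∈ G.edgeFinset then (ι (MvPolynomial.X e))⁻¹ else 0) v hv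
  simp only [← DodgsonForest.forestPoly_map, ← map_mul, ← map_add] at hgen
  have h2 := congrArg (MvPolynomial.eval₂Hom (Int.castRingHom R) x) (hι hgen)
  simp only [map_mul, map_add, DodgsonForest.forestPoly_map] at h2
  simpa [Φ] using h2
end

section
/- For m = 4 marked vertices on any graph G, the identity Φ_{(1,1,1,1)} Φ_{(1,2,3,4)} = A_4(B_1+B_4+B_5+B_6) + A_1(B_4+B_6) + A_2(B_4+B_5) holds, where A_1 = Φ_{(1,1,2,3)}, A_2 = Φ_{(1,2,1,3)}, A_4 = Φ_{(1,2,3,1)}, B_1 = Φ_{(1,1,1,2)}, B_4 = Φ_{(1,2,2,2)}, B_5 = Φ_{(1,1,2,2)}, B_6 = Φ_{(1,2,1,2)}. -/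
open Finset

namespace L44

set_option linter.unusedSectionVars false

open SimpleGraph

section graph

variable {V : Type*} [DecidableEq V]

/-- Reachability using only the edges in `F`. -/
def Rc (F : Finset (Sym2 V)) (a b : V) : Prop :=
  (SimpleGraph.fromEdgeSet (F : Set (Sym2 V))).Reachable a b

theorem Rc.rfl' (F : Finset (Sym2 V)) (a : V) : Rc F a a := SimpleGraph.Reachable.refl a

theorem Rc.symm {F : Finset (Sym2 V)} {a b : V} (h : Rc F a b) : Rc F b a :=
  SimpleGraph.Reachable.symm h

theorem Rc.trans {F : Finset (Sym2 V)} {a b c : V} (h : Rc F a b) (h' : Rc F b c) : Rc F a c :=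
  SimpleGraph.Reachable.trans h h'

theorem Rc.mono {F F' : Finset (Sym2 V)} (hF : F ⊆ F') {a b : V} (h : Rc F a b) : Rc F' a b :=
  SimpleGraph.Reachable.mono (SimpleGraph.fromEdgeSet_mono (by exact_mod_cast hF)) h

theorem rc_of_mem {F : Finset (Sym2 V)} {a b : V} (h : s(a, b) ∈ F) : Rc F a b := by
  by_cases hab : a = b
  · subst hab; exact Rc.rfl' _ _
  · exact SimpleGraph.Adj.reachable (by simp [SimpleGraph.fromEdgeSet_adj, h, hab])

theorem rc_insert {F : Finset (Sym2 V)} {u w a b : V} :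
    Rc (insert s(u, w) F) a b ↔
      Rc F a b ∨ (Rc F a u ∧ Rc F w b) ∨ (Rc F a w ∧ Rc F u b) := by
  constructor
  · rintro ⟨p⟩
    induction p with
    | nil => exact Or.inl (Rc.rfl' _ _)
    | @cons a c b h p ih =>
      rw [SimpleGraph.fromEdgeSet_adj] at h
      obtain ⟨h, -⟩ := h
      simp only [Finset.coe_insert, Set.mem_insert_iff, Finset.mem_coe] at h
      rcases h with h | h
      · rw [Sym2.eq_iff] at h
        rcases h with ⟨rfl, rfl⟩ | ⟨rfl, rfl⟩
        · rcases ih with ih | ih | ih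
          · exact Or.inr (Or.inl ⟨Rc.rfl' _ _, ih⟩)
          · exact Or.inr (Or.inl ⟨Rc.rfl' _ _, ih.2⟩)
          · exact Or.inl ih.2
        · rcases ih with ih | ih | ih
          · exact Or.inr (Or.inr ⟨Rc.rfl' _ _, ih⟩)
          · exact Or.inl ih.2
          · exact Or.inr (Or.inr ⟨Rc.rfl' _ _, ih.2⟩)
      · have h := rc_of_mem h
        rcases ih with ih | ih | ih
        · exact Or.inl (h.trans ih)
        · exact Or.inr (Or.inl ⟨h.trans ih.1, ih.2⟩)
        · exact Or.inr (Or.inr ⟨h.trans ih.1, ih.2⟩)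
  · have hs : F ⊆ insert s(u, w) F := Finset.subset_insert _ _
    have huw : Rc (insert s(u, w) F) u w := rc_of_mem (Finset.mem_insert_self _ _)
    rintro (h | h | h)
    · exact h.mono hs
    · exact ((h.1.mono hs).trans huw).trans (h.2.mono hs)
    · exact ((h.1.mono hs).trans huw.symm).trans (h.2.mono hs)

/-- Acyclicity of an edge set. -/
def Acy (F : Finset (Sym2 V)) : Prop :=
  (SimpleGraph.fromEdgeSet (F : Set (Sym2 V))).IsAcyclic

theorem gr_erase (F : Finset (Sym2 V)) (e : Sym2 V) :
    (SimpleGraph.fromEdgeSet (F : Set (Sym2 V))).deleteEdges {e} =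
      SimpleGraph.fromEdgeSet ((F.erase e : Finset (Sym2 V)) : Set (Sym2 V)) := by
  rw [SimpleGraph.deleteEdges_fromEdgeSet, Finset.coe_erase]

theorem Acy.not_rc {F : Finset (Sym2 V)} (h : Acy F) {u w : V} (huw : u ≠ w)
    (he : s(u, w) ∈ F) : ¬ Rc (F.erase s(u, w)) u w := by
  have := SimpleGraph.isAcyclic_iff_forall_isBridge.1 h (e := s(u, w))
    (by simp [he, huw])
  rw [SimpleGraph.isBridge_iff, gr_erase] at this
  exact this

theorem acy_insert {F : Finset (Sym2 V)} {u w : V} (huw : u ≠ w) (he : s(u, w) ∉ F) :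
    Acy (insert s(u, w) F) ↔ Acy F ∧ ¬ Rc F u w := by
  constructor
  · intro h
    refine ⟨SimpleGraph.IsAcyclic.anti (SimpleGraph.fromEdgeSet_mono
      (by exact_mod_cast Finset.subset_insert _ _)) h, ?_⟩
    have := h.not_rc huw (Finset.mem_insert_self _ _)
    rwa [Finset.erase_insert he] at this
  · rintro ⟨h, h'⟩
    have := SimpleGraph.IsAcyclic.sup_edge_of_not_reachable h' h
    unfold Acy
    convert this using 1
    rw [Finset.coe_insert, Set.insert_eq, SimpleGraph.fromEdgeSet_union, sup_comm]
    rfl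

/-- `(u,w)` is a directed edge of `F` on the path from `a` to `b`. -/
def D (F : Finset (Sym2 V)) (a b u w : V) : Prop :=
  s(u, w) ∈ F ∧ Rc (F.erase s(u, w)) a u ∧ Rc (F.erase s(u, w)) w b

open Classical in
theorem flow [Fintype V] {R : Type*} [CommRing R] {F : Finset (Sym2 V)} (h : Acy F)
    (hne : ∀ u w, s(u, w) ∈ F → u ≠ w) {a b : V} (hab : Rc F a b) (f : V → R) :
    ∑ u, ∑ w, (if D F a b u w then f u - f w else 0) = f a - f b := by
  obtain ⟨p, hp⟩ := SimpleGraph.Reachable.exists_isPath hab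
  clear hab
  induction p with
  | @nil a =>
    rw [sub_self]
    refine Finset.sum_eq_zero fun u _ => Finset.sum_eq_zero fun w _ => ?_
    rw [if_neg]
    rintro ⟨h1, h2, h3⟩
    exact h.not_rc (hne _ _ h1) h1 (h2.symm.trans h3.symm)
  | @cons a c b hac p ih =>
    rw [SimpleGraph.Walk.cons_isPath_iff] at hp
    have ih := ih hp.1
    rw [SimpleGraph.fromEdgeSet_adj] at hac
    obtain ⟨hac, hne'⟩ := hac
    rw [Finset.mem_coe] at hac
    have hnac : ¬ Rc (F.erase s(a, c)) a c := h.not_rc hne' hac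
    have hcb : Rc (F.erase s(a, c)) c b := by
      have hmem : s(a, c) ∉ p.edges := fun hh => hp.2 (p.fst_mem_support_of_mem_edges hh)
      have := (p.toDeleteEdge s(a, c) hmem).reachable
      rwa [gr_erase] at this
    have key : ∀ u w, (if D F a b u w then f u - f w else 0) =
        (if u = a then (if w = c then f a - f c else 0) else 0) +
          (if D F c b u w then f u - f w else 0) := by
      intro u w
      by_cases h1 : u = a ∧ w = c
      · obtain ⟨rfl, rfl⟩ := h1
        rw [if_pos rfl, if_pos rfl, if_pos ⟨hac, Rc.rfl' _ _, hcb⟩, if_neg, add_zero]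
        rintro ⟨-, h2, -⟩
        exact hnac h2.symm
      have e1 : (if u = a then (if w = c then f a - f c else 0) else 0) = 0 := by
        split_ifs with h2 h3
        · exact absurd ⟨h2, h3⟩ h1
        · rfl
        · rfl
      rw [e1, zero_add]
      have : D F a b u w ↔ D F c b u w := by
        by_cases h2 : u = c ∧ w = a
        · obtain ⟨rfl, rfl⟩ := h2
          have hs : s(u, w) = s(w, u) := Sym2.eq_swap
          unfold D
          rw [hs]
          constructor
          · rintro ⟨-, h3, -⟩
            exact absurd h3 hnac
          · rintro ⟨-, -, h3⟩
            exact absurd (h3.trans hcb.symm) hnac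
        · have hn : s(a, c) ≠ s(u, w) := by
            intro hh
            rw [Sym2.eq_iff] at hh
            rcases hh with ⟨rfl, rfl⟩ | ⟨rfl, rfl⟩
            · exact h1 ⟨rfl, rfl⟩
            · exact h2 ⟨rfl, rfl⟩
          have hr : Rc (F.erase s(u, w)) a c := rc_of_mem (Finset.mem_erase.2 ⟨hn, hac⟩)
          unfold D
          constructor
          · rintro ⟨h3, h4, h5⟩
            exact ⟨h3, hr.symm.trans h4, h5⟩
          · rintro ⟨h3, h4, h5⟩
            exact ⟨h3, hr.trans h4, h5⟩
      simp only [this]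
    simp only [key, Finset.sum_add_distrib, ih]
    simp

end graph

section sums

variable {V : Type*} [Fintype V] [DecidableEq V] {R : Type*} [CommRing R]

open Classical in
/-- Weighted sum over edge sets satisfying `Q`. -/
noncomputable def S (E : Finset (Sym2 V)) (x : Sym2 V → R) (Q : Finset (Sym2 V) → Prop) : R :=
  ∑ F ∈ E.powerset, if Q F then ∏ e ∈ E \ F, x e else 0

variable (E : Finset (Sym2 V)) (x : Sym2 V → R)

theorem S_congr {P Q : Finset (Sym2 V) → Prop} (h : ∀ F, F ⊆ E → (P F ↔ Q F)) :
    S E x P = S E x Q := by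
  unfold S
  refine Finset.sum_congr rfl fun F hF => ?_
  have := h F (Finset.mem_powerset.1 hF)
  by_cases hp : P F
  · rw [if_pos hp, if_pos (this.1 hp)]
  · rw [if_neg hp, if_neg (fun hh => hp (this.2 hh))]

theorem S_split (P Q : Finset (Sym2 V) → Prop) :
    S E x P = S E x (fun F => P F ∧ Q F) + S E x (fun F => P F ∧ ¬ Q F) := by
  unfold S
  rw [← Finset.sum_add_distrib]
  refine Finset.sum_congr rfl fun F _ => ?_
  by_cases h1 : P F <;> by_cases h2 : Q F <;> simp [h1, h2]

open Classical in
theorem S_insert {e : Sym2 V} (he : e ∈ E) (P Q : Finset (Sym2 V) → Prop)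
    (hP : ∀ F, F ⊆ E → P F → e ∉ F) (hQ : ∀ F, Q F → e ∈ F)
    (hPQ : ∀ F, F ⊆ E → e ∉ F → (P F ↔ Q (insert e F))) :
    S E x P = x e * S E x Q := by
  obtain ⟨E', he', rfl⟩ : ∃ E', e ∉ E' ∧ E = insert e E' :=
    ⟨E.erase e, Finset.notMem_erase _ _, (Finset.insert_erase he).symm⟩
  unfold S
  rw [Finset.sum_powerset_insert he', Finset.sum_powerset_insert he']
  have h1 : ∑ t ∈ E'.powerset, (if P (insert e t) then
      ∏ e ∈ insert e E' \ insert e t, x e else 0) = 0 := by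
    refine Finset.sum_eq_zero fun F hF => if_neg fun hh => ?_
    exact hP _ (Finset.insert_subset_insert _ (Finset.mem_powerset.1 hF)) hh
      (Finset.mem_insert_self _ _)
  have h2 : ∑ t ∈ E'.powerset, (if Q t then
      ∏ e ∈ insert e E' \ t, x e else 0) = 0 := by
    refine Finset.sum_eq_zero fun F hF => if_neg fun hh => ?_
    exact he' (Finset.mem_powerset.1 hF (hQ _ hh))
  rw [h1, h2, add_zero, zero_add, Finset.mul_sum]
  refine Finset.sum_congr rfl fun F hF => ?_
  have hF := Finset.mem_powerset.1 hF
  have heF : e ∉ F := fun hh => he' (hF hh)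
  have := hPQ F (hF.trans (Finset.subset_insert _ _)) heF
  by_cases h3 : P F
  · rw [if_pos h3, if_pos (this.1 h3), Finset.insert_sdiff_of_notMem _ heF,
      Finset.prod_insert (by simp [he']), Finset.insert_sdiff_insert,
      Finset.sdiff_insert_of_notMem he']
  · rw [if_neg h3, if_neg (fun hh => h3 (this.2 hh)), mul_zero]

open Classical in
theorem pairing (hE : ∀ u w, s(u, w) ∈ E → u ≠ w) (P Q : Finset (Sym2 V) → Prop) (a b : V)
    (hP : ∀ F, P F → Acy F ∧ Rc F a b) :
    ∑ u, ∑ w, (if s(u, w) ∈ E then S E x (fun F => P F ∧ D F a b u w) *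
      (S E x (fun F => Q F ∧ Rc F a u ∧ ¬ Rc F a w) -
        S E x (fun F => Q F ∧ Rc F a w ∧ ¬ Rc F a u)) else 0) =
      S E x P * S E x (fun F => Q F ∧ ¬ Rc F a b) := by
  -- expand as double sums over `F` and `F'`
  have h1 : ∀ u w, S E x (fun F => Q F ∧ Rc F a u ∧ ¬ Rc F a w) -
        S E x (fun F => Q F ∧ Rc F a w ∧ ¬ Rc F a u) =
      ∑ F' ∈ E.powerset, (if Q F' then ∏ e ∈ E \ F', x e else 0) *
        ((if Rc F' a u then 1 else 0) - (if Rc F' a w then 1 else 0)) := by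
    intro u w
    unfold S
    rw [← Finset.sum_sub_distrib]
    refine Finset.sum_congr rfl fun F _ => ?_
    by_cases h1 : Q F <;> by_cases h2 : Rc F a u <;> by_cases h3 : Rc F a w <;> simp [h1, h2, h3]
  have h2 : S E x (fun F => Q F ∧ ¬ Rc F a b) =
      ∑ F' ∈ E.powerset, (if Q F' then ∏ e ∈ E \ F', x e else 0) *
        ((if Rc F' a a then 1 else 0) - (if Rc F' a b then 1 else 0)) := by
    unfold S
    refine Finset.sum_congr rfl fun F _ => ?_
    have := Rc.rfl' F a
    by_cases h1 : Q F <;> by_cases h2 : Rc F a b <;> simp [h1, h2, this]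
  have h3 : ∀ u w, (if s(u, w) ∈ E then S E x (fun F => P F ∧ D F a b u w) *
      (S E x (fun F => Q F ∧ Rc F a u ∧ ¬ Rc F a w) -
        S E x (fun F => Q F ∧ Rc F a w ∧ ¬ Rc F a u)) else 0) =
      ∑ F ∈ E.powerset, ∑ F' ∈ E.powerset,
        ((if P F then ∏ e ∈ E \ F, x e else 0) * (if Q F' then ∏ e ∈ E \ F', x e else 0)) *
        (if D F a b u w then
          (if Rc F' a u then 1 else 0) - (if Rc F' a w then 1 else 0) else 0) := by
    intro u w
    rw [h1]
    unfold S
    by_cases he : s(u, w) ∈ E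
    · rw [if_pos he, Finset.sum_mul_sum]
      refine Finset.sum_congr rfl fun F _ => Finset.sum_congr rfl fun F' _ => ?_
      by_cases h4 : P F <;> by_cases h5 : D F a b u w <;> simp [h4, h5, mul_assoc]
    · rw [if_neg he]
      symm
      refine Finset.sum_eq_zero fun F hF => Finset.sum_eq_zero fun F' _ => ?_
      have hD : ¬ D F a b u w := fun hh => he (Finset.mem_powerset.1 hF hh.1)
      rw [if_neg hD, mul_zero]
  simp only [h3]
  rw [h2]
  unfold S
  rw [Finset.sum_mul_sum]
  have h4 : ∀ g : V → V → Finset (Sym2 V) → Finset (Sym2 V) → R,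
      ∑ u, ∑ w, ∑ F ∈ E.powerset, ∑ F' ∈ E.powerset, g u w F F' =
      ∑ F ∈ E.powerset, ∑ F' ∈ E.powerset, ∑ u, ∑ w, g u w F F' := by
    intro g
    have : ∀ u, ∑ w, ∑ F ∈ E.powerset, ∑ F' ∈ E.powerset, g u w F F' =
        ∑ F ∈ E.powerset, ∑ F' ∈ E.powerset, ∑ w, g u w F F' := by
      intro u
      rw [Finset.sum_comm]
      exact Finset.sum_congr rfl fun F _ => Finset.sum_comm
    simp only [this]
    rw [Finset.sum_comm]
    exact Finset.sum_congr rfl fun F _ => Finset.sum_comm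
  rw [h4]
  refine Finset.sum_congr rfl fun F hF => Finset.sum_congr rfl fun F' _ => ?_
  simp only [← Finset.mul_sum]
  by_cases h5 : P F
  · rw [flow (hP F h5).1 (fun u w hh => hE u w (Finset.mem_powerset.1 hF hh)) (hP F h5).2
      (fun z => if Rc F' a z then (1 : R) else 0)]
    rw [mul_assoc]
  · simp [h5]

end sums

section main

variable {V : Type*} [Fintype V] [DecidableEq V] (v : Fin 4 → V)

/-- Spanning trees. -/
def PT (F : Finset (Sym2 V)) : Prop := Acy F ∧ ∀ z, Rc F z (v 0)

/-- Two-component forests separating `v 0` and `v 3`. -/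
def PB (F : Finset (Sym2 V)) : Prop :=
  Acy F ∧ ¬ Rc F (v 0) (v 3) ∧ ∀ z, Rc F z (v 0) ∨ Rc F z (v 3)

/-- Four-component forests. -/
def PF (F : Finset (Sym2 V)) : Prop :=
  Acy F ∧ (∀ i k, i ≠ k → ¬ Rc F (v i) (v k)) ∧ ∀ z, ∃ i, Rc F z (v i)

/-- Three-component forests joining `v 0` and `v j`. -/
def PA (j : Fin 4) (F : Finset (Sym2 V)) : Prop :=
  Acy F ∧ Rc F (v 0) (v j) ∧ (∀ i k, i ≠ k → i ≠ j → k ≠ j → ¬ Rc F (v i) (v k)) ∧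
    ∀ z, ∃ i, Rc F z (v i)

variable {v}

theorem PB_iff_PT {F : Finset (Sym2 V)} {u w : V} (huw : u ≠ w) (he : s(u, w) ∉ F) :
    (PB v F ∧ Rc F (v 0) u ∧ ¬ Rc F (v 0) w) ↔
      (PT v (insert s(u, w) F) ∧ D (insert s(u, w) F) (v 0) (v 3) u w) := by
  unfold PB PT D
  rw [acy_insert huw he, Finset.erase_insert he]
  constructor
  · rintro ⟨⟨h1, h2, h3⟩, h4, h5⟩
    have hw : Rc F w (v 3) := (h3 w).resolve_left fun hh => h5 hh.symm
    refine ⟨⟨⟨h1, fun hh => h5 (h4.trans hh)⟩, fun z => ?_⟩, Finset.mem_insert_self _ _, h4, hw⟩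
    rw [rc_insert]
    rcases h3 z with h | h
    · exact Or.inl h
    · exact Or.inr (Or.inr ⟨h.trans hw.symm, h4.symm⟩)
  · rintro ⟨⟨⟨h1, h2⟩, h3⟩, -, h4, h5⟩
    refine ⟨⟨h1, fun hh => h2 ((h4.symm.trans hh).trans h5.symm), fun z => ?_⟩, h4,
      fun hh => h2 (h4.symm.trans hh)⟩
    have := h3 z
    rw [rc_insert] at this
    rcases this with h | h | h
    · exact Or.inl h
    · exact Or.inl (h.1.trans h4.symm)
    · exact Or.inr (h.1.trans h5)

theorem PF_iff_PA {F : Finset (Sym2 V)} {u w : V} (huw : u ≠ w) (he : s(u, w) ∉ F)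
    {j : Fin 4} (hj : j ≠ 0) :
    (PF v F ∧ Rc F (v 0) u ∧ Rc F w (v j)) ↔
      (PA v j (insert s(u, w) F) ∧ D (insert s(u, w) F) (v 0) (v j) u w) := by
  unfold PF PA D
  rw [acy_insert huw he, Finset.erase_insert he]
  have hs : F ⊆ insert s(u, w) F := Finset.subset_insert _ _
  constructor
  · rintro ⟨⟨h1, h2, h3⟩, h4, h5⟩
    refine ⟨⟨⟨h1, fun hh => h2 0 j hj.symm ((h4.trans hh).trans h5)⟩, ?_, ?_, ?_⟩,
      Finset.mem_insert_self _ _, h4, h5⟩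
    · exact rc_insert.2 (Or.inr (Or.inl ⟨h4, h5⟩))
    · intro i k hik hi hk hh
      rw [rc_insert] at hh
      rcases hh with h | h | h
      · exact h2 _ _ hik h
      · exact h2 j k hk.symm (h5.symm.trans h.2)
      · exact h2 i j hi (h.1.trans h5)
    · intro z
      obtain ⟨i, hi⟩ := h3 z
      exact ⟨i, hi.mono hs⟩
  · rintro ⟨⟨⟨h1, h2⟩, h3, h6, h7⟩, -, h4, h5⟩
    have h0j : ¬ Rc F (v 0) (v j) := fun hh => h2 ((h4.symm.trans hh).trans h5.symm)
    refine ⟨⟨h1, ?_, ?_⟩, h4, h5⟩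
    · intro i k hik hh
      have hh' := hh.mono hs
      by_cases hi : i = j
      · subst hi
        by_cases hk : k = 0
        · subst hk; exact h0j hh.symm
        · exact h6 0 k (Ne.symm hk) hj.symm hik.symm (h3.trans hh')
      · by_cases hk : k = j
        · subst hk
          by_cases hi0 : i = 0
          · subst hi0; exact h0j hh
          · exact h6 i 0 hi0 hi hj.symm (hh'.trans h3.symm)
        · exact h6 i k hik hi hk hh'
    · intro z
      obtain ⟨i, hi⟩ := h7 z
      rw [rc_insert] at hi
      rcases hi with h | h | h
      · exact ⟨i, h⟩
      · exact ⟨0, h.1.trans h4.symm⟩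
      · exact ⟨j, h.1.trans h5⟩

variable {R : Type*} [CommRing R] (E : Finset (Sym2 V)) (x : Sym2 V → R)

theorem SB {u w : V} (huw : u ≠ w) (he : s(u, w) ∈ E) :
    S E x (fun F => PB v F ∧ Rc F (v 0) u ∧ ¬ Rc F (v 0) w) =
      x s(u, w) * S E x (fun F => PT v F ∧ D F (v 0) (v 3) u w) := by
  refine S_insert E x he _ _ ?_ ?_ ?_
  · rintro F - ⟨-, h1, h2⟩ hh
    exact h2 (h1.trans (rc_of_mem hh))
  · rintro F ⟨-, h⟩
    exact h.1
  · intro F _ h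
    exact PB_iff_PT huw h

theorem SA {u w : V} (huw : u ≠ w) (he : s(u, w) ∈ E) {j : Fin 4} (hj : j ≠ 0) :
    S E x (fun F => PF v F ∧ Rc F (v 0) u ∧ Rc F w (v j)) =
      x s(u, w) * S E x (fun F => PA v j F ∧ D F (v 0) (v j) u w) := by
  refine S_insert E x he _ _ ?_ ?_ ?_
  · rintro F - ⟨h0, h1, h2⟩ hh
    exact h0.2.1 0 j hj.symm ((h1.trans (rc_of_mem hh)).trans h2)
  · rintro F ⟨-, h⟩
    exact h.1
  · intro F _ h
    exact PF_iff_PA huw h hj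

theorem SF (u w : V) :
    S E x (fun F => PF v F ∧ Rc F (v 0) u ∧ ¬ Rc F (v 0) w) =
      S E x (fun F => PF v F ∧ Rc F (v 0) u ∧ Rc F w (v 1)) +
      S E x (fun F => PF v F ∧ Rc F (v 0) u ∧ Rc F w (v 2)) +
      S E x (fun F => PF v F ∧ Rc F (v 0) u ∧ Rc F w (v 3)) := by
  have key : ∀ F, PF v F → ∀ i k, i ≠ k → Rc F w (v i) → ¬ Rc F w (v k) :=
    fun F h i k hik h1 h2 => h.2.1 i k hik (h1.symm.trans h2)
  rw [S_split E x _ (fun F => Rc F w (v 1)), add_assoc]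
  congr 1
  · refine S_congr E x fun F _ => ⟨fun h => ⟨h.1.1, h.1.2.1, h.2⟩, fun h => ⟨⟨h.1, h.2.1, ?_⟩, h.2.2⟩⟩
    exact fun hh => key F h.1 1 0 (by decide) h.2.2 hh.symm
  · rw [S_split E x _ (fun F => Rc F w (v 2))]
    congr 1
    · refine S_congr E x fun F _ => ⟨fun h => ⟨h.1.1.1, h.1.1.2.1, h.2⟩,
        fun h => ⟨⟨⟨h.1, h.2.1, ?_⟩, ?_⟩, h.2.2⟩⟩
      · exact fun hh => key F h.1 2 0 (by decide) h.2.2 hh.symm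
      · exact key F h.1 2 1 (by decide) h.2.2
    · refine S_congr E x fun F _ => ⟨fun h => ⟨h.1.1.1, h.1.1.2.1, ?_⟩,
        fun h => ⟨⟨⟨h.1, h.2.1, ?_⟩, ?_⟩, ?_⟩⟩
      · obtain ⟨⟨⟨h1, h2, h3⟩, h4⟩, h5⟩ := h
        obtain ⟨i, hi⟩ := h1.2.2 w
        fin_cases i
        · exact absurd (Rc.symm hi) h3
        · exact absurd hi h4
        · exact absurd hi h5
        · exact hi
      · exact fun hh => key F h.1 3 0 (by decide) h.2.2 hh.symm
      · exact key F h.1 3 1 (by decide) h.2.2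
      · exact key F h.1 3 2 (by decide) h.2.2

theorem core (hE : ∀ u w, s(u, w) ∈ E → u ≠ w) :
    S E x (PT v) * S E x (PF v) =
      S E x (PA v 1) * S E x (fun F => PB v F ∧ ¬ Rc F (v 0) (v 1)) +
      S E x (PA v 2) * S E x (fun F => PB v F ∧ ¬ Rc F (v 0) (v 2)) +
      S E x (PA v 3) * S E x (fun F => PB v F ∧ ¬ Rc F (v 0) (v 3)) := by
  classical
  have hF : S E x (PF v) = S E x (fun F => PF v F ∧ ¬ Rc F (v 0) (v 3)) :=
    S_congr E x fun F _ => ⟨fun h => ⟨h, h.2.1 0 3 (by decide)⟩, fun h => h.1⟩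
  rw [hF, ← pairing E x hE (PT v) (PF v) (v 0) (v 3) (fun F h => ⟨h.1, (h.2 _).symm⟩),
    ← pairing E x hE (PA v 1) (PB v) (v 0) (v 1) (fun F h => ⟨h.1, h.2.1⟩),
    ← pairing E x hE (PA v 2) (PB v) (v 0) (v 2) (fun F h => ⟨h.1, h.2.1⟩),
    ← pairing E x hE (PA v 3) (PB v) (v 0) (v 3) (fun F h => ⟨h.1, h.2.1⟩)]
  simp only [← Finset.sum_add_distrib]
  set A : V → V → R := fun u w => S E x (fun F => PA v 1 F ∧ D F (v 0) (v 1) u w) +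
    S E x (fun F => PA v 2 F ∧ D F (v 0) (v 2) u w) +
    S E x (fun F => PA v 3 F ∧ D F (v 0) (v 3) u w) with hA
  set B : V → V → R := fun u w => S E x (fun F => PB v F ∧ Rc F (v 0) u ∧ ¬ Rc F (v 0) w) with hB
  have e1 : ∀ u w, (if s(u, w) ∈ E then S E x (fun F => PT v F ∧ D F (v 0) (v 3) u w) *
      (S E x (fun F => PF v F ∧ Rc F (v 0) u ∧ ¬ Rc F (v 0) w) -
        S E x (fun F => PF v F ∧ Rc F (v 0) w ∧ ¬ Rc F (v 0) u)) else 0) =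
      (if s(u, w) ∈ E then A u w * B u w else 0) - (if s(u, w) ∈ E then A w u * B u w else 0) := by
    intro u w
    by_cases he : s(u, w) ∈ E
    · have he' : s(w, u) ∈ E := by rwa [Sym2.eq_swap]
      have hne := hE u w he
      have hx : x s(w, u) = x s(u, w) := by rw [Sym2.eq_swap]
      simp only [if_pos he, hA, hB]
      rw [SF, SF, SB E x hne he, SA E x hne he (j := 1) (by decide),
        SA E x hne he (j := 2) (by decide), SA E x hne he (j := 3) (by decide),
        SA E x hne.symm he' (j := 1) (by decide),
        SA E x hne.symm he' (j := 2) (by decide), SA E x hne.symm he' (j := 3) (by decide), hx]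
      ring
    · simp [he]
  have e2 : ∑ u, ∑ w, (if s(u, w) ∈ E then A w u * B u w else 0) =
      ∑ u, ∑ w, (if s(u, w) ∈ E then A u w * B w u else 0) := by
    rw [Finset.sum_comm]
    refine Finset.sum_congr rfl fun u _ => Finset.sum_congr rfl fun w _ => ?_
    rw [Sym2.eq_swap]
  simp only [e1, Finset.sum_sub_distrib]
  rw [e2, ← Finset.sum_sub_distrib]
  refine Finset.sum_congr rfl fun u _ => ?_
  rw [← Finset.sum_sub_distrib]
  refine Finset.sum_congr rfl fun w _ => ?_
  by_cases he : s(u, w) ∈ E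
  · simp only [if_pos he, hA, hB]
    ring
  · simp [he]

theorem forestPoly_eq (G : SimpleGraph V) [DecidableRel G.Adj] (p : Fin 4 → Option ℕ)
    (Q : Finset (Sym2 V) → Prop) (hp : ∀ i, p i ≠ none)
    (hQ : ∀ F, Q F ↔ (Acy F ∧ (∀ i j, Rc F (v i) (v j) ↔ p i = p j) ∧ ∀ z, ∃ i, Rc F z (v i))) :
    forestPoly G x v p = S G.edgeFinset x Q := by
  unfold forestPoly S
  refine Finset.sum_congr rfl fun F hF => ?_
  have hF := Finset.mem_powerset.1 hF
  have : IsCompatibleForest G v p F ↔ Q F := by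
    rw [hQ]
    unfold IsCompatibleForest
    have h1 : (F : Set (Sym2 V)) ⊆ G.edgeSet := by
      intro e he
      exact SimpleGraph.mem_edgeFinset.1 (hF he)
    simp only [h1, true_and, ne_eq, hp, not_false_eq_true, forall_true_left]
    rfl
  by_cases h : Q F
  · rw [if_pos h, if_pos (this.2 h)]
  · rw [if_neg h, if_neg (fun hh => h (this.1 hh))]

end main

end L44

/-- **The identity `𝓛_{4,4}(1)`** for `m = 4` marked vertices on any graph:
`Φ_{(1,1,1,1)} Φ_{(1,2,3,4)} = A₄(B₁+B₄+B₅+B₆) + A₁(B₄+B₆) + A₂(B₄+B₅)` with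
`A₁ = Φ_{(1,1,2,3)}`, `A₂ = Φ_{(1,2,1,3)}`, `A₄ = Φ_{(1,2,3,1)}`,
`B₁ = Φ_{(1,1,1,2)}`, `B₄ = Φ_{(1,2,2,2)}`, `B₅ = Φ_{(1,1,2,2)}`, `B₆ = Φ_{(1,2,1,2)}`. -/
theorem L44_1_identity {V : Type*} [Fintype V] [DecidableEq V] {R : Type*}
    [CommRing R] (G : SimpleGraph V) [DecidableRel G.Adj] (x : Sym2 V → R)
    (v : Fin 4 → V) (hv : Function.Injective v) :
    let Φ : (Fin 4 → Option ℕ) → R := fun p => forestPoly G x v p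
    let A1 := Φ ![some 1, some 1, some 2, some 3]
    let A2 := Φ ![some 1, some 2, some 1, some 3]
    let A4 := Φ ![some 1, some 2, some 3, some 1]
    let B1 := Φ ![some 1, some 1, some 1, some 2]
    let B4 := Φ ![some 1, some 2, some 2, some 2]
    let B5 := Φ ![some 1, some 1, some 2, some 2]
    let B6 := Φ ![some 1, some 2, some 1, some 2]
    Φ ![some 1, some 1, some 1, some 1] * Φ ![some 1, some 2, some 3, some 4] =
      A4 * (B1 + B4 + B5 + B6) + A1 * (B4 + B6) + A2 * (B4 + B5) := by
  intro Φ A1 A2 A4 B1 B4 B5 B6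
  have hT : Φ ![some 1, some 1, some 1, some 1] = L44.S G.edgeFinset x (L44.PT v) := by
    refine L44.forestPoly_eq x G _ _ (by decide) fun F => ?_
    constructor
    · rintro ⟨h1, h2⟩
      refine ⟨h1, fun i j => ⟨fun _ => ?_, fun _ => (h2 _).trans (h2 _).symm⟩, fun z => ⟨0, h2 z⟩⟩
      fin_cases i <;> fin_cases j <;> rfl
    · rintro ⟨h1, h2, h3⟩
      refine ⟨h1, fun z => ?_⟩
      obtain ⟨i, hi⟩ := h3 z
      refine hi.trans ((h2 _ _).2 ?_)
      fin_cases i <;> rfl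
  have hF : Φ ![some 1, some 2, some 3, some 4] = L44.S G.edgeFinset x (L44.PF v) := by
    refine L44.forestPoly_eq x G _ _ (by decide) fun F => ?_
    have hp : ∀ i j : Fin 4, (![some 1, some 2, some 3, some 4] : Fin 4 → Option ℕ) i =
      (![some 1, some 2, some 3, some 4] : Fin 4 → Option ℕ) j ↔ i = j := by decide
    unfold L44.PF
    simp only [hp]
    refine and_congr_right fun _ => and_congr_left fun _ => ?_
    constructor
    · intro h i j
      refine ⟨fun h1 => by_contra fun h2 => h i j h2 h1, ?_⟩
      rintro rfl
      exact L44.Rc.rfl' _ _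
    · intro h i k hik h1
      exact hik ((h i k).1 h1)
  have hAgen : ∀ (j : Fin 4) (p : Fin 4 → Option ℕ), (∀ i, p i ≠ none) → p 0 = p j →
      (∀ i k, i ≠ k → i ≠ j → k ≠ j → p i ≠ p k) → j ≠ 0 →
      Φ p = L44.S G.edgeFinset x (L44.PA v j) := by
    intro j p hp h0 hp2 hj
    refine L44.forestPoly_eq x G _ _ hp fun F => ?_
    unfold L44.PA
    refine and_congr_right fun _ => ?_
    rw [← and_assoc]
    refine and_congr_left fun _ => ?_
    constructor
    · rintro ⟨h1, h2⟩
      -- replace `j` by `0`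
      have hr : ∀ i, ∃ i', i' ≠ j ∧ L44.Rc F (v i) (v i') ∧ p i = p i' := by
        intro i
        by_cases hi : i = j
        · subst hi
          exact ⟨0, hj.symm, h1.symm, h0.symm⟩
        · exact ⟨i, hi, L44.Rc.rfl' _ _, rfl⟩
      intro i k
      obtain ⟨i', hi1, hi2, hi3⟩ := hr i
      obtain ⟨k', hk1, hk2, hk3⟩ := hr k
      rw [hi3, hk3]
      by_cases hik : i' = k'
      · subst hik
        exact ⟨fun _ => rfl, fun _ => hi2.trans hk2.symm⟩
      · refine ⟨fun h => ?_, fun h => ?_⟩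
        · exact absurd ((hi2.symm.trans h).trans hk2) (h2 _ _ hik hi1 hk1)
        · exact absurd h (hp2 _ _ hik hi1 hk1)
    · intro h
      exact ⟨(h _ _).2 h0, fun i k h1 h2 h3 h4 => hp2 i k h1 h2 h3 ((h _ _).1 h4)⟩
  have hA1 : A1 = L44.S G.edgeFinset x (L44.PA v 1) :=
    hAgen 1 _ (by decide) (by decide) (by decide) (by decide)
  have hA2 : A2 = L44.S G.edgeFinset x (L44.PA v 2) :=
    hAgen 2 _ (by decide) (by decide) (by decide) (by decide)
  have hA4 : A4 = L44.S G.edgeFinset x (L44.PA v 3) :=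
    hAgen 3 _ (by decide) (by decide) (by decide) (by decide)
  have hBgen : ∀ (p : Fin 4 → Option ℕ), (∀ i, p i ≠ none) → p 0 ≠ p 3 →
      (∀ i, p i = p 0 ∨ p i = p 3) →
      Φ p = L44.S G.edgeFinset x (fun F => L44.PB v F ∧
        (L44.Rc F (v 0) (v 1) ↔ p 0 = p 1) ∧ (L44.Rc F (v 0) (v 2) ↔ p 0 = p 2)) := by
    intro p hp h03 hp2
    refine L44.forestPoly_eq x G _ _ hp fun F => ?_
    constructor
    · rintro ⟨⟨h1, h2, h3⟩, h4, h5⟩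
      have h6 : ∀ i, L44.Rc F (v 0) (v i) ↔ p 0 = p i := by
        intro i
        fin_cases i
        · exact ⟨fun _ => rfl, fun _ => L44.Rc.rfl' _ _⟩
        · exact h4
        · exact h5
        · exact ⟨fun h => absurd h h2, fun h => absurd h h03⟩
      refine ⟨h1, fun i j => ?_, fun z => ?_⟩
      · have hi := h6 i
        have hj := h6 j
        by_cases hi0 : p 0 = p i
        · rw [← hi0, ← hj]
          exact ⟨fun h => (hi.2 hi0).trans h, fun h => (hi.2 hi0).symm.trans h⟩
        · have hi3 : p i = p 3 := (hp2 i).resolve_left (Ne.symm hi0)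
          have hr3 : L44.Rc F (v i) (v 3) :=
            (h3 (v i)).resolve_left fun h => hi0 (hi.1 h.symm)
          by_cases hj0 : p 0 = p j
          · refine ⟨fun h => absurd (hi.1 ((hj.2 hj0).trans h.symm)) hi0, fun h => ?_⟩
            exact absurd (hj0.trans h.symm) hi0
          · have hj3 : p j = p 3 := (hp2 j).resolve_left (Ne.symm hj0)
            have hs3 : L44.Rc F (v j) (v 3) :=
              (h3 (v j)).resolve_left fun h => hj0 (hj.1 h.symm)
            exact ⟨fun _ => hi3.trans hj3.symm, fun _ => hr3.trans hs3.symm⟩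
      · rcases h3 z with h | h
        · exact ⟨0, h⟩
        · exact ⟨3, h⟩
    · rintro ⟨h1, h2, h3⟩
      refine ⟨⟨h1, fun h => h03 ((h2 _ _).1 h), fun z => ?_⟩, h2 _ _, h2 _ _⟩
      obtain ⟨i, hi⟩ := h3 z
      rcases hp2 i with h | h
      · exact Or.inl (hi.trans ((h2 _ _).2 h))
      · exact Or.inr (hi.trans ((h2 _ _).2 h))
  have hB1 : B1 = _ := hBgen _ (by decide) (by decide) (by decide)
  have hB4 : B4 = _ := hBgen _ (by decide) (by decide) (by decide)
  have hB5 : B5 = _ := hBgen _ (by decide) (by decide) (by decide)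
  have hB6 : B6 = _ := hBgen _ (by decide) (by decide) (by decide)
  simp at hB1 hB4 hB5 hB6
  have s1 : L44.S G.edgeFinset x (fun F => L44.PB v F ∧ ¬ L44.Rc F (v 0) (v 1)) = B4 + B6 := by
    rw [L44.S_split _ x _ (fun F => L44.Rc F (v 0) (v 2)), add_comm, hB4, hB6]
    congr 1 <;> exact L44.S_congr _ x fun F _ => by tauto
  have s2 : L44.S G.edgeFinset x (fun F => L44.PB v F ∧ ¬ L44.Rc F (v 0) (v 2)) = B4 + B5 := by
    rw [L44.S_split _ x _ (fun F => L44.Rc F (v 0) (v 1)), add_comm, hB4, hB5]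
    congr 1 <;> exact L44.S_congr _ x fun F _ => by tauto
  have s3 : L44.S G.edgeFinset x (fun F => L44.PB v F ∧ ¬ L44.Rc F (v 0) (v 3)) =
      (B1 + B5) + (B4 + B6) := by
    rw [L44.S_split _ x _ (fun F => L44.Rc F (v 0) (v 1)), ← s1]
    congr 1
    · rw [L44.S_split _ x _ (fun F => L44.Rc F (v 0) (v 2)), hB1, hB5]
      congr 1 <;> exact L44.S_congr _ x fun F _ => by unfold L44.PB; tauto
    · exact L44.S_congr _ x fun F _ => by unfold L44.PB; tauto
  rw [hT, hF, L44.core G.edgeFinset x (fun u w h => by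
    rw [SimpleGraph.mem_edgeFinset, SimpleGraph.mem_edgeSet] at h; exact h.ne),
    s1, s2, s3, hA1, hA2, hA4]
  ring
end

section
/- The vector space X_4 of formal linear combinations Σ α_{i,j} A_iB_j (over the 6×7 grid of pairs of a 3-part partition A_i and a 2-part partition B_j of {1,2,3,4}) whose evaluation as spanning forest polynomials vanishes on every graph with 4 marked vertices has dimension exactly 8 = 4·(4−2); a basis is given by the eight differences L_{4,4}(1)−L_{4,4}(3), L_{4,4}(2)−L_{4,4}(3), L_{4,3}(1)−L_{4,4}(3), L_{4,3}(2)−L_{4,4}(3), L_{4,2}(1)−L_{4,4}(3), L_{4,2}(2)−L_{4,4}(3), L_{4,1}(1)−L_{4,4}(3), L_{4,1}(2)−L_{4,4}(3). -/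
open Finset

/-- The six 3-part set partitions of the four marked vertices, in the paper's indexing:
`A₁=(1,1,2,3)`, `A₂=(1,2,1,3)`, `A₃=(1,2,2,3)`, `A₄=(1,2,3,1)`, `A₅=(1,2,3,2)`,
`A₆=(1,2,3,3)`. -/
def Apart4 : Fin 6 → Fin 4 → Option ℕ :=
  ![![some 1, some 1, some 2, some 3],
    ![some 1, some 2, some 1, some 3],
    ![some 1, some 2, some 2, some 3],
    ![some 1, some 2, some 3, some 1],
    ![some 1, some 2, some 3, some 2],
    ![some 1, some 2, some 3, some 3]]

/-- The seven 2-part set partitions of the four marked vertices, in the paper's indexing: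
`B₁=(1,1,1,2)`, `B₂=(1,1,2,1)`, `B₃=(1,2,1,1)`, `B₄=(1,2,2,2)`, `B₅=(1,1,2,2)`,
`B₆=(1,2,1,2)`, `B₇=(1,2,2,1)`. -/
def Bpart4 : Fin 7 → Fin 4 → Option ℕ :=
  ![![some 1, some 1, some 1, some 2],
    ![some 1, some 1, some 2, some 1],
    ![some 1, some 2, some 1, some 1],
    ![some 1, some 2, some 2, some 2],
    ![some 1, some 1, some 2, some 2],
    ![some 1, some 2, some 1, some 2],
    ![some 1, some 2, some 2, some 1]]

/-- The formal sum of `A_iB_j` monomials (an element of the vector space `V₄` with basis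
the 42 monomials, recorded as its coefficient vector) determined by a list of index
pairs. -/
def mkAB (l : List (Fin 6 × Fin 7)) : Fin 6 × Fin 7 → ℚ := fun q => (l.count q : ℚ)

/-- `L_{4,4}(1) = A₄(B₁+B₄+B₅+B₆)+A₁(B₄+B₆)+A₂(B₄+B₅)` as a formal sum. -/
def L441 : Fin 6 × Fin 7 → ℚ :=
  mkAB [(3,0),(3,3),(3,4),(3,5),(0,3),(0,5),(1,3),(1,4)]
/-- `L_{4,4}(2) = A₅(B₁+B₃+B₅+B₇)+A₁(B₃+B₇)+A₃(B₃+B₅)`. -/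
def L442 : Fin 6 × Fin 7 → ℚ :=
  mkAB [(4,0),(4,2),(4,4),(4,6),(0,2),(0,6),(2,2),(2,4)]
/-- `L_{4,4}(3) = A₆(B₁+B₂+B₆+B₇)+A₂(B₂+B₇)+A₃(B₂+B₆)`. -/
def L443 : Fin 6 × Fin 7 → ℚ :=
  mkAB [(5,0),(5,1),(5,5),(5,6),(1,1),(1,6),(2,1),(2,5)]
/-- `L_{4,3}(1) = A₂(B₂+B₄+B₅+B₇)+A₁(B₄+B₇)+A₄(B₄+B₅)`. -/
def L431 : Fin 6 × Fin 7 → ℚ :=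
  mkAB [(1,1),(1,3),(1,4),(1,6),(0,3),(0,6),(3,3),(3,4)]
/-- `L_{4,3}(2) = A₃(B₂+B₃+B₅+B₆)+A₁(B₃+B₆)+A₅(B₃+B₅)`. -/
def L432 : Fin 6 × Fin 7 → ℚ :=
  mkAB [(2,1),(2,2),(2,4),(2,5),(0,2),(0,5),(4,2),(4,4)]
/-- `L_{4,3}(3) = A₆(B₁+B₂+B₆+B₇)+A₄(B₁+B₆)+A₅(B₁+B₇)`. -/
def L433 : Fin 6 × Fin 7 → ℚ :=
  mkAB [(5,0),(5,1),(5,5),(5,6),(3,0),(3,5),(4,0),(4,6)]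
/-- `L_{4,2}(1) = A₁(B₃+B₄+B₆+B₇)+A₂(B₄+B₇)+A₄(B₄+B₆)`. -/
def L421 : Fin 6 × Fin 7 → ℚ :=
  mkAB [(0,2),(0,3),(0,5),(0,6),(1,3),(1,6),(3,3),(3,5)]
/-- `L_{4,2}(2) = A₃(B₂+B₃+B₅+B₆)+A₂(B₂+B₅)+A₆(B₂+B₆)`. -/
def L422 : Fin 6 × Fin 7 → ℚ :=
  mkAB [(2,1),(2,2),(2,4),(2,5),(1,1),(1,4),(5,1),(5,5)]
/-- `L_{4,1}(1) = A₁(B₃+B₄+B₆+B₇)+A₃(B₃+B₆)+A₅(B₃+B₇)`. -/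
def L411 : Fin 6 × Fin 7 → ℚ :=
  mkAB [(0,2),(0,3),(0,5),(0,6),(2,2),(2,5),(4,2),(4,6)]
/-- `L_{4,1}(2) = A₂(B₂+B₄+B₅+B₇)+A₃(B₂+B₅)+A₆(B₂+B₇)`. -/
def L412 : Fin 6 × Fin 7 → ℚ :=
  mkAB [(1,1),(1,3),(1,4),(1,6),(2,1),(2,4),(5,1),(5,6)]

/-- `α ∈ X₄`: the formal linear combination `Σ α_{ij} A_iB_j` evaluates to zero, as
spanning forest polynomials, on every graph with 4 distinct marked vertices and every
assignment of values to the edge variables. -/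
def MemX4 (α : Fin 6 × Fin 7 → ℚ) : Prop :=
  ∀ (V : Type) [Fintype V] [DecidableEq V] (G : SimpleGraph V) [DecidableRel G.Adj]
    (x : Sym2 V → ℚ) (v : Fin 4 → V), Function.Injective v →
    ∑ q : Fin 6 × Fin 7, α q *
      (forestPoly G x v (Apart4 q.1) * forestPoly G x v (Bpart4 q.2)) = 0

/-! ### Auxiliary graph lemmas -/

section ForestAux

/-- Reachability in the graph with edge set `F`. -/
def RR {V : Type*} (F : Finset (Sym2 V)) (a b : V) : Prop :=
  (SimpleGraph.fromEdgeSet (F : Set (Sym2 V))).Reachable a b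

/-- Acyclicity of the graph with edge set `F`. -/
def AC {V : Type*} (F : Finset (Sym2 V)) : Prop :=
  (SimpleGraph.fromEdgeSet (F : Set (Sym2 V))).IsAcyclic

theorem RR.refl {V : Type*} (F : Finset (Sym2 V)) (a : V) : RR F a a :=
  SimpleGraph.Reachable.refl a

theorem RR.symm {V : Type*} {F : Finset (Sym2 V)} {a b : V} (h : RR F a b) : RR F b a :=
  SimpleGraph.Reachable.symm h

theorem RR.trans {V : Type*} {F : Finset (Sym2 V)} {a b c : V} (h : RR F a b) (h' : RR F b c) :
    RR F a c :=
  SimpleGraph.Reachable.trans h h'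

theorem RR.of_mem {V : Type*} {F : Finset (Sym2 V)} {a b : V} (h : s(a, b) ∈ F) (hne : a ≠ b) :
    RR F a b :=
  SimpleGraph.Adj.reachable (by simp [SimpleGraph.fromEdgeSet_adj, h, hne])


open Classical in
theorem reach_insert {V : Type*} (F : Finset (Sym2 V)) (u w a b : V) :
    (SimpleGraph.fromEdgeSet ((insert s(u, w) F : Finset (Sym2 V)) : Set (Sym2 V))).Reachable a b ↔
      ((SimpleGraph.fromEdgeSet (F : Set (Sym2 V))).Reachable a b ∨
      ((SimpleGraph.fromEdgeSet (F : Set (Sym2 V))).Reachable a u ∧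
        (SimpleGraph.fromEdgeSet (F : Set (Sym2 V))).Reachable w b) ∨
      ((SimpleGraph.fromEdgeSet (F : Set (Sym2 V))).Reachable a w ∧
        (SimpleGraph.fromEdgeSet (F : Set (Sym2 V))).Reachable u b)) := by
  have hmono : ∀ {c d : V}, (SimpleGraph.fromEdgeSet (F : Set (Sym2 V))).Reachable c d →
      (SimpleGraph.fromEdgeSet
        ((insert s(u, w) F : Finset (Sym2 V)) : Set (Sym2 V))).Reachable c d := by
    intro c d h
    refine h.mono (SimpleGraph.fromEdgeSet_mono ?_)
    simp
  have huw : (SimpleGraph.fromEdgeSet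
        ((insert s(u, w) F : Finset (Sym2 V)) : Set (Sym2 V))).Reachable u w := by
    by_cases h : u = w
    · subst h; rfl
    · apply SimpleGraph.Adj.reachable
      simp [SimpleGraph.fromEdgeSet_adj, h]
  constructor
  · rintro ⟨p⟩
    induction p with
    | nil => left; rfl
    | @cons x y z hxy p ih =>
      rw [SimpleGraph.fromEdgeSet_adj] at hxy
      obtain ⟨hm, hne⟩ := hxy
      simp only [Finset.coe_insert, Set.mem_insert_iff, Finset.mem_coe] at hm
      rcases hm with hm | hm
      · rw [Sym2.eq_iff] at hm
        rcases hm with ⟨rfl, rfl⟩ | ⟨rfl, rfl⟩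
        · rcases ih with h | ⟨h1, h2⟩ | ⟨h1, h2⟩
          · exact Or.inr (Or.inl ⟨.rfl, h⟩)
          · exact Or.inr (Or.inl ⟨.rfl, h2⟩)
          · exact Or.inl h2
        · rcases ih with h | ⟨h1, h2⟩ | ⟨h1, h2⟩
          · exact Or.inr (Or.inr ⟨.rfl, h⟩)
          · exact Or.inl h2
          · exact Or.inr (Or.inr ⟨.rfl, h2⟩)
      · have hr : (SimpleGraph.fromEdgeSet (F : Set (Sym2 V))).Reachable x y :=
          SimpleGraph.Adj.reachable (by simp [SimpleGraph.fromEdgeSet_adj, hm, hne])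
        rcases ih with h | ⟨h1, h2⟩ | ⟨h1, h2⟩
        · exact Or.inl (hr.trans h)
        · exact Or.inr (Or.inl ⟨hr.trans h1, h2⟩)
        · exact Or.inr (Or.inr ⟨hr.trans h1, h2⟩)
  · rintro (h | ⟨h1, h2⟩ | ⟨h1, h2⟩)
    · exact hmono h
    · exact (hmono h1).trans (huw.trans (hmono h2))
    · exact (hmono h1).trans (huw.symm.trans (hmono h2))

open Classical in
theorem acyc_insert {V : Type*} (F : Finset (Sym2 V)) (u w : V) (hne : u ≠ w)
    (hF : s(u, w) ∉ F) :
    (SimpleGraph.fromEdgeSet ((insert s(u, w) F : Finset (Sym2 V)) : Set (Sym2 V))).IsAcyclic ↔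
      ((SimpleGraph.fromEdgeSet (F : Set (Sym2 V))).IsAcyclic ∧
      ¬ (SimpleGraph.fromEdgeSet (F : Set (Sym2 V))).Reachable u w) := by
  have h1 : SimpleGraph.fromEdgeSet ((insert s(u, w) F : Finset (Sym2 V)) : Set (Sym2 V)) =
      SimpleGraph.fromEdgeSet (F : Set (Sym2 V)) ⊔ SimpleGraph.edge u w := by
    ext x y
    simp only [Finset.coe_insert, SimpleGraph.fromEdgeSet_adj, Set.mem_insert_iff,
      Finset.mem_coe, SimpleGraph.sup_adj, SimpleGraph.edge, Set.mem_singleton_iff]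
    tauto
  rw [h1, SimpleGraph.isAcyclic_sup_fromEdgeSet_iff]
  simp [hne, hF, SimpleGraph.fromEdgeSet_adj]

open Classical in
/-- The telescoping identity along the path from `a` to `b` in a forest. -/
theorem telescope {V : Type*} [Fintype V] (F : Finset (Sym2 V))
    (hac : AC F)
    (hnd : ∀ u w : V, s(u, w) ∈ F → u ≠ w) (f : V → ℚ) (a b : V)
    (hab : RR F a b) :
    (∑ d : V × V, if s(d.1, d.2) ∈ F ∧
      RR (F.erase s(d.1, d.2)) a d.1 ∧
      RR (F.erase s(d.1, d.2)) d.2 b then f d.1 - f d.2 else 0) = f a - f b := by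
  have hbr : ∀ u w : V, s(u, w) ∈ F →
      ¬ RR (F.erase s(u, w)) u w := by
    intro u w h
    have := (acyc_insert (F.erase s(u, w)) u w (hnd u w h) (by simp)).1
      (by rw [Finset.insert_erase h]; exact hac)
    exact this.2
  obtain ⟨p⟩ := hab
  induction p with
  | nil =>
    rw [sub_self]
    apply Finset.sum_eq_zero
    rintro ⟨u, w⟩ -
    rw [if_neg]
    rintro ⟨h1, h2, h3⟩
    exact hbr u w h1 (h3.trans h2).symm
  | @cons a a' b haa p ih =>
    rw [SimpleGraph.fromEdgeSet_adj] at haa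
    obtain ⟨hm, hne⟩ := haa
    simp only [Finset.mem_coe] at hm
    have hR : RR F a' b := ⟨p⟩
    have key : ∀ (u w : V), s(u, w) ≠ s(a, a') →
        RR (F.erase s(u, w)) a a' := by
      intro u w h
      exact RR.of_mem (Finset.mem_erase.2 ⟨h.symm, hm⟩) hne
    rw [show f a - f b = (f a - f a') + (f a' - f b) by ring, ← ih, ← sub_eq_iff_eq_add,
      ← Finset.sum_sub_distrib]
    have hne2 : ((a, a') : V × V) ≠ (a', a) := by
      intro h; exact hne (Prod.ext_iff.1 h).1
    rw [Fintype.sum_eq_add (a, a') (a', a) hne2]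
    · have hsw : s(a', a) = s(a, a') := Sym2.eq_swap
      simp only [hsw, hm, true_and]
      have hb := hbr a a' hm
      have hb' : ¬ RR (F.erase s(a, a')) a' a := fun h => hb h.symm
      have hR' := hR
      rw [← Finset.insert_erase hm, RR, reach_insert] at hR'
      have hex : RR (F.erase s(a, a')) a' b ↔
          ¬ RR (F.erase s(a, a')) a b := by
        constructor
        · intro h1 h2; exact hb (h2.trans h1.symm)
        · intro h
          rcases hR' with h1 | ⟨h1, h2⟩ | ⟨h1, h2⟩
          · exact h1
          · exact h2
          · exact absurd h2 h
      by_cases h : RR (F.erase s(a, a')) a b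
      · have h' := (not_congr hex).2 (not_not.2 h)
        simp only [hb, hb', h, h', RR.refl, and_true, true_and, and_false,
          false_and, and_self, if_true, if_false]
        ring
      · have h' := hex.2 h
        simp only [hb, hb', h, h', RR.refl, and_true, true_and, and_false,
          false_and, and_self, if_true, if_false]
        ring
    · rintro ⟨u, w⟩ ⟨h1, h2⟩
      have hd : s(u, w) ≠ s(a, a') := by
        intro h
        rw [Sym2.eq_iff] at h
        rcases h with ⟨rfl, rfl⟩ | ⟨rfl, rfl⟩
        · exact h1 rfl
        · exact h2 rfl
      have k := key u w hd
      have : RR (F.erase s(u, w)) a u ↔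
          RR (F.erase s(u, w)) a' u :=
        ⟨fun h => k.symm.trans h, fun h => k.trans h⟩
      simp only [this, sub_self]

open Classical in
/-- Moving an edge out of a forest: the generic exchange lemma. -/
theorem exchange {V : Type*} [Fintype V] (E : Finset (Sym2 V))
    (hnd : ∀ u w : V, s(u, w) ∈ E → u ≠ w) (W : Finset (Sym2 V) → ℚ)
    (P Q : Finset (Sym2 V) → Prop) (a b : V)
    (hP : ∀ F ⊆ E, P F → AC F ∧
      RR F a b)
    (hPQ : ∀ F ⊆ E, ∀ u w : V, s(u, w) ∈ E → s(u, w) ∉ F →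
      RR F a u →
      RR F w b →
      (P (insert s(u, w) F) ↔ Q F)) (f : V → ℚ) :
    (∑ F ∈ E.powerset, if P F then W F * (f a - f b) else 0) =
      ∑ d : V × V, ∑ F ∈ E.powerset,
        if s(d.1, d.2) ∈ E ∧ s(d.1, d.2) ∉ F ∧ Q F ∧
          RR F a d.1 ∧
          RR F d.2 b then
        W (insert s(d.1, d.2) F) * (f d.1 - f d.2) else 0 := by
  have h1 : ∀ F ∈ E.powerset, (if P F then W F * (f a - f b) else 0) =
      ∑ d : V × V, if s(d.1, d.2) ∈ F ∧ P F ∧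
      RR (F.erase s(d.1, d.2)) a d.1 ∧
      RR (F.erase s(d.1, d.2)) d.2 b then W F * (f d.1 - f d.2) else 0 := by
    intro F hF
    rw [Finset.mem_powerset] at hF
    by_cases hp : P F
    · obtain ⟨h1, h2⟩ := hP F hF hp
      rw [if_pos hp, ← telescope F h1 (fun u w h => hnd u w (hF h)) f a b h2, Finset.mul_sum]
      refine Finset.sum_congr rfl fun d _ => ?_
      simp only [hp, true_and, mul_ite, mul_zero]
    · simp [hp]
  rw [Finset.sum_congr rfl h1, Finset.sum_comm]
  refine Finset.sum_congr rfl fun d _ => ?_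
  obtain ⟨u, w⟩ := d
  simp only
  rw [← Finset.sum_filter, ← Finset.sum_filter]
  refine Finset.sum_bij' (fun F _ => F.erase s(u, w)) (fun F _ => insert s(u, w) F) ?_ ?_ ?_ ?_ ?_
  · intro F hF
    simp only [Finset.mem_filter, Finset.mem_powerset] at hF ⊢
    obtain ⟨hE, hm, hp, ha, hb⟩ := hF
    refine ⟨(Finset.erase_subset _ _).trans hE, hE hm, by simp, ?_, ha, hb⟩
    rw [← hPQ (F.erase s(u, w)) ((Finset.erase_subset _ _).trans hE) u w (hE hm) (by simp) ha hb,
      Finset.insert_erase hm]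
    exact hp
  · intro F hF
    simp only [Finset.mem_filter, Finset.mem_powerset] at hF ⊢
    obtain ⟨hE, hm, hn, hq, ha, hb⟩ := hF
    refine ⟨Finset.insert_subset hm hE, by simp, (hPQ F hE u w hm hn ha hb).2 hq, ?_, ?_⟩
    · rwa [Finset.erase_insert hn]
    · rwa [Finset.erase_insert hn]
  · intro F hF
    simp only [Finset.mem_filter, Finset.mem_powerset] at hF
    exact Finset.insert_erase hF.2.1
  · intro F hF
    simp only [Finset.mem_filter, Finset.mem_powerset] at hF
    exact Finset.erase_insert hF.2.2.1
  · intro F hF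
    simp only [Finset.mem_filter, Finset.mem_powerset] at hF
    rw [Finset.insert_erase hF.2.1]

end ForestAux

/-! ### The exchange identity -/

section ExchangeIdentity

/-- Spanning trees. -/
def PTree {V : Type*} (J : V) (F : Finset (Sym2 V)) : Prop :=
  AC F ∧ ∀ w, RR F J w

/-- Spanning forests with two trees, separating `J` and `C`. -/
def PTwo {V : Type*} (J C : V) (F : Finset (Sym2 V)) : Prop :=
  AC F ∧ ¬ RR F J C ∧ ∀ w, RR F J w ∨ RR F C w

/-- Spanning forests with all the marked vertices separated. -/
def PFour {V : Type*} (v : Fin 4 → V) (F : Finset (Sym2 V)) : Prop :=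
  AC F ∧ (∀ i i', RR F (v i) (v i') ↔ i = i') ∧ ∀ w, ∃ i, RR F w (v i)

/-- Spanning forests with exactly the marked vertices `j` and `k` joined. -/
def PThree {V : Type*} (v : Fin 4 → V) (j k : Fin 4) (F : Finset (Sym2 V)) : Prop :=
  AC F ∧ (∀ i i', RR F (v i) (v i') ↔ (i = i' ∨ (i = j ∧ i' = k) ∨ (i = k ∧ i' = j))) ∧
    ∀ w, ∃ i, RR F w (v i)

open Classical in
theorem tree_two {V : Type*} (J C : V) (F : Finset (Sym2 V)) (u w : V) (hne : u ≠ w)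
    (hn : s(u, w) ∉ F) (h1 : RR F J u) (h2 : RR F w C) :
    PTree J (insert s(u, w) F) ↔ PTwo J C F := by
  have ha := acyc_insert F u w hne hn
  have hr := fun b => reach_insert F u w J b
  change AC _ ↔ AC F ∧ ¬ RR F u w at ha
  change ∀ b, RR _ J b ↔ (RR F J b ∨ (RR F J u ∧ RR F w b) ∨ (RR F J w ∧ RR F u b)) at hr
  unfold PTree PTwo
  rw [ha]
  simp only [hr]
  constructor
  · rintro ⟨⟨h3, h4⟩, h5⟩
    refine ⟨h3, fun h => h4 (h1.symm.trans (h.trans h2.symm)), fun x => ?_⟩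
    rcases h5 x with h | ⟨-, h⟩ | ⟨h, -⟩
    · exact Or.inl h
    · exact Or.inr (h2.symm.trans h)
    · exact absurd (h1.symm.trans h) h4
  · rintro ⟨h3, h4, h5⟩
    refine ⟨⟨h3, fun h => h4 (h1.trans (h.trans h2))⟩, fun x => ?_⟩
    rcases h5 x with h | h
    · exact Or.inl h
    · exact Or.inr (Or.inl ⟨h1, h2.trans h⟩)

open Classical in
theorem three_four {V : Type*} (v : Fin 4 → V) (j k : Fin 4) (hjk : j ≠ k)
    (F : Finset (Sym2 V)) (u w : V) (hne : u ≠ w)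
    (hn : s(u, w) ∉ F) (h1 : RR F (v j) u) (h2 : RR F w (v k)) :
    PThree v j k (insert s(u, w) F) ↔ PFour v F := by
  have ha := acyc_insert F u w hne hn
  have hr := fun a b => reach_insert F u w a b
  change AC _ ↔ AC F ∧ ¬ RR F u w at ha
  change ∀ a b, RR _ a b ↔ (RR F a b ∨ (RR F a u ∧ RR F w b) ∨ (RR F a w ∧ RR F u b)) at hr
  have e1 : ∀ x, RR F x u ↔ RR F x (v j) :=
    fun x => ⟨fun h => h.trans h1.symm, fun h => h.trans h1⟩
  have e1' : ∀ x, RR F u x ↔ RR F (v j) x :=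
    fun x => ⟨fun h => h1.trans h, fun h => h1.symm.trans h⟩
  have e2 : ∀ x, RR F x w ↔ RR F x (v k) :=
    fun x => ⟨fun h => h.trans h2, fun h => h.trans h2.symm⟩
  have e2' : ∀ x, RR F w x ↔ RR F (v k) x :=
    fun x => ⟨fun h => h2.symm.trans h, fun h => h2.trans h⟩
  unfold PThree PFour
  rw [ha]
  simp only [hr, e1, e2, e1', e2']
  constructor
  · rintro ⟨⟨h3, h4⟩, h5, h6⟩
    refine ⟨h3, fun i i' => ⟨fun h => ?_, fun h => h ▸ RR.refl _ _⟩, fun x => ?_⟩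
    · rcases (h5 i i').1 (Or.inl h) with h' | ⟨rfl, rfl⟩ | ⟨rfl, rfl⟩
      · exact h'
      · exact absurd h h4
      · exact absurd h.symm h4
    · obtain ⟨i, h | ⟨h, -⟩ | ⟨h, -⟩⟩ := h6 x
      · exact ⟨i, h⟩
      · exact ⟨j, h⟩
      · exact ⟨k, h⟩
  · rintro ⟨h3, h4, h5⟩
    refine ⟨⟨h3, fun h => hjk ((h4 _ _).1 h)⟩, fun i i' => ?_, fun x => ?_⟩
    · simp only [h4]
      tauto
    · obtain ⟨i, h⟩ := h5 x
      exact ⟨i, Or.inl h⟩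

open Classical in
theorem exchange_identity {V : Type*} [Fintype V] (E : Finset (Sym2 V))
    (hnd : ∀ u w : V, s(u, w) ∈ E → u ≠ w) (x : Sym2 V → ℚ) (v : Fin 4 → V)
    (j c : Fin 4) (hjc : j ≠ c) :
    (∑ F ∈ E.powerset, if PTree (v j) F then ∏ e ∈ E \ F, x e else 0) *
      (∑ F ∈ E.powerset, if PFour v F then ∏ e ∈ E \ F, x e else 0) =
    ∑ k : Fin 4, if j ≠ k then
      (∑ F ∈ E.powerset, if PThree v j k F then ∏ e ∈ E \ F, x e else 0) *
      (∑ F ∈ E.powerset, if PTwo (v j) (v c) F ∧ ¬ RR F (v j) (v k) then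
        ∏ e ∈ E \ F, x e else 0) else 0 := by
  set W : Finset (Sym2 V) → ℚ := fun F => ∏ e ∈ E \ F, x e with hW
  have hWi : ∀ F : Finset (Sym2 V), ∀ e ∈ E, e ∉ F → W F = x e * W (insert e F) := by
    intro F e he hF
    simp only [hW]
    have h1 : E \ F = insert e (E \ insert e F) := by
      ext y
      simp only [Finset.mem_sdiff, Finset.mem_insert]
      by_cases hy : y = e
      · subst hy; simp [he, hF]
      · simp [hy]
    rw [h1, Finset.prod_insert (by simp)]
  -- indicator functions of the tree containing `v j`
  set a : Finset (Sym2 V) → V → ℚ := fun F y => if RR F (v j) y then 1 else 0 with ha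
  have hmem : ∀ (F : Finset (Sym2 V)) (d : V × V), s(d.1, d.2) ∈ E → s(d.1, d.2) ∈ F →
      a F d.1 = a F d.2 := by
    intro F d hE hF
    have h := RR.of_mem hF (hnd _ _ hE)
    have : RR F (v j) d.1 ↔ RR F (v j) d.2 := ⟨fun h' => h'.trans h, fun h' => h'.trans h.symm⟩
    simp only [ha, this]
  -- the left-hand side
  have hL : (∑ F ∈ E.powerset, if PTree (v j) F then W F else 0) *
      (∑ F ∈ E.powerset, if PFour v F then W F else 0) =
      ∑ H ∈ E.powerset, ∑ S ∈ E.powerset, ∑ d : V × V,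
        if s(d.1, d.2) ∈ E ∧ s(d.1, d.2) ∉ H ∧ PTwo (v j) (v c) H ∧ PFour v S then
          a H d.1 * (1 - a H d.2) * (a S d.1 - a S d.2) * (W (insert s(d.1, d.2) H) * W S)
          else 0 := by
    rw [Finset.sum_comm, Finset.mul_sum]
    refine Finset.sum_congr rfl fun S hS => ?_
    by_cases h4 : PFour v S
    · have hex := exchange E hnd W (PTree (v j)) (PTwo (v j) (v c)) (v j) (v c)
        (fun F _ h => ⟨h.1, h.2 _⟩)
        (fun F _ u w hE hF h1 h2 => tree_two _ _ F u w (hnd _ _ hE) hF h1 h2) (a S)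
      have e1 : a S (v j) - a S (v c) = 1 := by
        have h1 : RR S (v j) (v j) := RR.refl _ _
        have h2 : ¬ RR S (v j) (v c) := fun h => hjc ((h4.2.1 _ _).1 h)
        simp only [ha, h1, h2, if_true, if_false, sub_zero]
      simp only [e1, mul_one] at hex
      rw [hex, if_pos h4, Finset.sum_mul, Finset.sum_comm]
      rw [Finset.sum_comm]
      simp only [Finset.sum_mul]
      rw [Finset.sum_comm]
      refine Finset.sum_congr rfl fun H hH => Finset.sum_congr rfl fun d _ => ?_
      by_cases hc : s(d.1, d.2) ∈ E ∧ s(d.1, d.2) ∉ H ∧ PTwo (v j) (v c) H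
      · obtain ⟨c1, c2, c3⟩ := hc
        have c4 : RR H d.2 (v c) ↔ ¬ RR H (v j) d.2 := by
          constructor
          · intro h h'; exact c3.2.1 (h'.trans h)
          · intro h
            rcases c3.2.2 d.2 with h' | h'
            · exact absurd h' h
            · exact h'.symm
        change (if _ ∧ _ ∧ _ ∧ RR H (v j) d.1 ∧ RR H d.2 (v c) then _ else _) * _ = _
        simp only [c1, c2, c3, c4, h4, true_and, not_false_eq_true, if_true, and_true]
        by_cases q1 : RR H (v j) d.1 <;> by_cases q2 : RR H (v j) d.2 <;>
          simp only [ha, q1, q2, if_true, if_false, not_true_eq_false, not_false_eq_true,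
            and_true, and_false, and_self] <;> ring
      · rw [if_neg (fun h => hc ⟨h.1, h.2.1, h.2.2.1⟩), if_neg (fun h => hc ⟨h.1, h.2.1, h.2.2.1⟩),
          zero_mul]
    · rw [if_neg h4, mul_zero]
      symm
      refine Finset.sum_eq_zero fun H _ => Finset.sum_eq_zero fun d _ => ?_
      rw [if_neg (fun h => h4 h.2.2.2)]
  -- the right-hand side
  have hR : (∑ k : Fin 4, if j ≠ k then
      (∑ F ∈ E.powerset, if PThree v j k F then W F else 0) *
      (∑ F ∈ E.powerset, if PTwo (v j) (v c) F ∧ ¬ RR F (v j) (v k) then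
        W F else 0) else 0) =
      ∑ H ∈ E.powerset, ∑ S ∈ E.powerset, ∑ d : V × V,
        if s(d.1, d.2) ∈ E ∧ s(d.1, d.2) ∉ S ∧ PTwo (v j) (v c) H ∧ PFour v S then
          a S d.1 * (1 - a S d.2) * (a H d.1 - a H d.2) * (W H * W (insert s(d.1, d.2) S))
          else 0 := by
    have step : ∀ k : Fin 4, (if j ≠ k then
      (∑ F ∈ E.powerset, if PThree v j k F then W F else 0) *
      (∑ F ∈ E.powerset, if PTwo (v j) (v c) F ∧ ¬ RR F (v j) (v k) then
        W F else 0) else 0) = ∑ H ∈ E.powerset, ∑ S ∈ E.powerset, ∑ d : V × V,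
        if j ≠ k ∧ s(d.1, d.2) ∈ E ∧ s(d.1, d.2) ∉ S ∧ PTwo (v j) (v c) H ∧ PFour v S ∧
          RR S d.2 (v k) then
          a S d.1 * (a H d.1 - a H d.2) * (W H * W (insert s(d.1, d.2) S)) else 0 := by
      intro k
      by_cases hk : j ≠ k
      · rw [if_pos hk, Finset.mul_sum]
        refine Finset.sum_congr rfl fun H _ => ?_
        by_cases h2 : PTwo (v j) (v c) H
        · have hex := exchange E hnd W (PThree v j k) (PFour v) (v j) (v k)
            (fun F _ h => ⟨h.1, (h.2.1 _ _).2 (by simp)⟩)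
            (fun F _ u w hE hF h1 h2 => three_four _ _ _ hk F u w (hnd _ _ hE) hF h1 h2) (a H)
          have e1 : a H (v j) - a H (v k) = if RR H (v j) (v k) then 0 else 1 := by
            have h1 : RR H (v j) (v j) := RR.refl _ _
            simp only [ha, h1, if_true]
            split_ifs <;> norm_num
          have e2 : (∑ F ∈ E.powerset, if PThree v j k F then W F else 0) *
              (if PTwo (v j) (v c) H ∧ ¬ RR H (v j) (v k) then W H else 0) =
              (∑ F ∈ E.powerset,
                if PThree v j k F then W F * (a H (v j) - a H (v k)) else 0) * W H := by
            rw [e1]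
            by_cases h3 : RR H (v j) (v k)
            · simp [h3]
            · simp [h3, h2]
          rw [e2, hex, Finset.sum_comm, Finset.sum_mul]
          refine Finset.sum_congr rfl fun S _ => ?_
          rw [Finset.sum_mul]
          refine Finset.sum_congr rfl fun d _ => ?_
          change (if _ ∧ _ ∧ _ ∧ RR S (v j) d.1 ∧ RR S d.2 (v k) then _ else _) * _ = _
          simp only [ha, hk, h2, true_and]
          by_cases q1 : RR S (v j) d.1
          · simp only [q1, true_and, if_true]
            rw [ite_mul, zero_mul]
            congr 1
            · simp [hk]
            · ring
          · simp [q1]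
        · rw [if_neg (fun h => h2 h.1), mul_zero]
          symm
          refine Finset.sum_eq_zero fun H _ => Finset.sum_eq_zero fun d _ => ?_
          rw [if_neg (fun h => h2 h.2.2.2.1)]
      · rw [if_neg hk]
        symm
        refine Finset.sum_eq_zero fun H _ => Finset.sum_eq_zero fun S _ =>
          Finset.sum_eq_zero fun d _ => ?_
        rw [if_neg (fun h => hk h.1)]
    rw [Finset.sum_congr rfl fun k _ => step k, Finset.sum_comm]
    refine Finset.sum_congr rfl fun H _ => ?_
    rw [Finset.sum_comm]
    refine Finset.sum_congr rfl fun S _ => ?_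
    rw [Finset.sum_comm]
    refine Finset.sum_congr rfl fun d _ => ?_
    by_cases hc : s(d.1, d.2) ∈ E ∧ s(d.1, d.2) ∉ S ∧ PTwo (v j) (v c) H ∧ PFour v S
    · rw [if_pos hc]
      obtain ⟨c1, c2, c3, c4⟩ := hc
      have hone : (∑ k : Fin 4, if j ≠ k ∧ RR S d.2 (v k) then (1 : ℚ) else 0) =
          1 - a S d.2 := by
        obtain ⟨i, hi⟩ := c4.2.2 d.2
        have hk : ∀ k, RR S d.2 (v k) ↔ k = i := by
          intro k
          constructor
          · intro h; exact ((c4.2.1 _ _).1 (h.symm.trans hi))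
          · rintro rfl; exact hi
        have hj : RR S (v j) d.2 ↔ j = i := by
          rw [← hk]; exact ⟨RR.symm, RR.symm⟩
        simp only [ha, hk, hj]
        by_cases hji : j = i
        · subst hji
          simp [eq_comm]
        · rw [Finset.sum_eq_single i]
          · simp [hji]
          · intro b _ hb; simp [hb]
          · simp
      rw [← hone, show ∀ A B C D : ℚ, A * B * C * D = (A * C * D) * B from fun A B C D => by ring,
        Finset.mul_sum]
      refine Finset.sum_congr rfl fun k _ => ?_
      simp only [c1, c2, c3, c4, true_and, not_false_eq_true]
      split_ifs <;> ring
    · rw [if_neg hc]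
      refine Finset.sum_eq_zero fun k _ => ?_
      rw [if_neg (fun h => hc ⟨h.2.1, h.2.2.1, h.2.2.2.1, h.2.2.2.2.1⟩)]
  rw [hL, hR]
  refine Finset.sum_congr rfl fun H _ => Finset.sum_congr rfl fun S _ => ?_
  -- symmetrise over the orientation of the moved edge
  have hswap : ∀ g h : V × V → ℚ, (∀ d, g d + g d.swap = h d + h d.swap) →
      ∑ d : V × V, g d = ∑ d : V × V, h d := by
    intro g h hgh
    have h1 : ∑ d : V × V, g d.swap = ∑ d : V × V, g d :=
      Equiv.sum_comp (Equiv.prodComm V V) g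
    have h2 : ∑ d : V × V, h d.swap = ∑ d : V × V, h d :=
      Equiv.sum_comp (Equiv.prodComm V V) h
    have h3 : ∑ d : V × V, (g d + g d.swap) = ∑ d : V × V, (h d + h d.swap) :=
      Finset.sum_congr rfl fun d _ => hgh d
    rw [Finset.sum_add_distrib, Finset.sum_add_distrib, h1, h2] at h3
    linarith
  apply hswap
  intro d
  obtain ⟨u, w⟩ := d
  have hsw : s(w, u) = s(u, w) := Sym2.eq_swap
  simp only [Prod.swap, hsw]
  by_cases hE : s(u, w) ∈ E
  · by_cases hH : s(u, w) ∈ H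
    · have := hmem H (u, w) hE hH
      simp only at this
      simp [hH, this]
    · by_cases hS : s(u, w) ∈ S
      · have := hmem S (u, w) hE hS
        simp only at this
        simp [hS, this]
      · simp only [hE, hH, hS, true_and, not_false_eq_true]
        by_cases h24 : PTwo (v j) (v c) H ∧ PFour v S
        · simp only [h24, if_true]
          rw [hWi H _ hE hH, hWi S _ hE hS]
          simp only [and_self, if_true]
          ring
        · simp only [h24, if_false]
  · simp [hE]

end ExchangeIdentity

/-! ### From the exchange identity to the vanishing of the differences -/

section Soundness

theorem compat_iff {V : Type*} [Fintype V] [DecidableEq V] (G : SimpleGraph V) [DecidableRel G.Adj]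
    (v : Fin 4 → V) (p : Fin 4 → Option ℕ) (hp : ∀ i, p i ≠ none) (F : Finset (Sym2 V))
    (hF : F ⊆ G.edgeFinset) :
    IsCompatibleForest G v p F ↔ (AC F ∧ (∀ i j, RR F (v i) (v j) ↔ p i = p j) ∧
      ∀ w, ∃ i, RR F w (v i)) := by
  have h1 : (F : Set (Sym2 V)) ⊆ G.edgeSet := by
    intro e he
    exact SimpleGraph.mem_edgeFinset.1 (hF he)
  unfold IsCompatibleForest
  constructor
  · rintro ⟨-, h2, h3, h4⟩
    refine ⟨h2, fun i j => h3 i j (hp i) (hp j), fun w => ?_⟩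
    obtain ⟨i, -, hi⟩ := h4 w
    exact ⟨i, hi⟩
  · rintro ⟨h2, h3, h4⟩
    refine ⟨h1, h2, fun i j _ _ => h3 i j, fun w => ?_⟩
    obtain ⟨i, hi⟩ := h4 w
    exact ⟨i, hp i, hi⟩

open Classical in
theorem forestPoly_eq {V : Type*} [Fintype V] [DecidableEq V] (G : SimpleGraph V)
    [DecidableRel G.Adj] (x : Sym2 V → ℚ) (v : Fin 4 → V) (p : Fin 4 → Option ℕ) :
    forestPoly G x v p = ∑ F ∈ G.edgeFinset.powerset,
      (if IsCompatibleForest G v p F then (1 : ℚ) else 0) * ∏ e ∈ G.edgeFinset \ F, x e := by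
  unfold forestPoly
  refine Finset.sum_congr rfl fun F _ => ?_
  by_cases h : IsCompatibleForest G v p F
  · simp only [h, if_true, one_mul]
  · simp only [h, if_false, zero_mul]

theorem Apart4_ne_none : ∀ (a : Fin 6) (i : Fin 4), Apart4 a i ≠ none := by decide

theorem Bpart4_ne_none : ∀ (b : Fin 7) (i : Fin 4), Bpart4 b i ≠ none := by decide

theorem Apart4_exists : ∀ j k : Fin 4, j ≠ k → ∃ a : Fin 6,
    (∀ a' : Fin 6, Apart4 a' j = Apart4 a' k ↔ a' = a) ∧
    (∀ i i' : Fin 4, Apart4 a i = Apart4 a i' ↔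
      (i = i' ∨ (i = j ∧ i' = k) ∨ (i = k ∧ i' = j))) := by decide

theorem Bpart4_unique : ∀ b b' : Fin 7,
    (∀ i i' : Fin 4, Bpart4 b i = Bpart4 b i' ↔ Bpart4 b' i = Bpart4 b' i') → b = b' := by decide

theorem Bpart4_two : ∀ (b : Fin 7) (j c i : Fin 4), Bpart4 b j ≠ Bpart4 b c →
    Bpart4 b j = Bpart4 b i ∨ Bpart4 b c = Bpart4 b i := by decide

theorem Bpart4_exists : ∀ s : Finset (Fin 4), ∀ j c : Fin 4, j ∈ s → c ∉ s → ∃ b : Fin 7,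
    ∀ i i' : Fin 4, Bpart4 b i = Bpart4 b i' ↔ (i ∈ s ↔ i' ∈ s) := by decide

open Classical in
theorem three_sum {V : Type*} [Fintype V] [DecidableEq V] (G : SimpleGraph V)
    [DecidableRel G.Adj] (v : Fin 4 → V) (j k : Fin 4) (hjk : j ≠ k) (F : Finset (Sym2 V))
    (hF : F ⊆ G.edgeFinset) :
    (if PThree v j k F then (1 : ℚ) else 0) = ∑ a : Fin 6,
      (if Apart4 a j = Apart4 a k then (1 : ℚ) else 0) *
        (if IsCompatibleForest G v (Apart4 a) F then (1 : ℚ) else 0) := by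
  obtain ⟨a, h1, h2⟩ := Apart4_exists j k hjk
  simp only [h1]
  rw [Finset.sum_eq_single a]
  · have : PThree v j k F ↔ IsCompatibleForest G v (Apart4 a) F := by
      rw [compat_iff G v _ (Apart4_ne_none a) F hF]
      simp only [h2]
      rfl
    simp [this]
  · intro b _ hb; simp [hb]
  · simp

open Classical in
theorem two_sum {V : Type*} [Fintype V] [DecidableEq V] (G : SimpleGraph V)
    [DecidableRel G.Adj] (v : Fin 4 → V) (j c k : Fin 4) (F : Finset (Sym2 V))
    (hF : F ⊆ G.edgeFinset) :
    (if PTwo (v j) (v c) F ∧ ¬ RR F (v j) (v k) then (1 : ℚ) else 0) = ∑ b : Fin 7,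
      (if Bpart4 b j ≠ Bpart4 b c ∧ Bpart4 b j ≠ Bpart4 b k then (1 : ℚ) else 0) *
        (if IsCompatibleForest G v (Bpart4 b) F then (1 : ℚ) else 0) := by
  have hc := fun b => compat_iff G v _ (Bpart4_ne_none b) F hF
  by_cases hex : ∃ b, IsCompatibleForest G v (Bpart4 b) F
  · obtain ⟨b, hb⟩ := hex
    have hb' := (hc b).1 hb
    rw [Finset.sum_eq_single b]
    · simp only [hb, if_true, mul_one]
      congr 1
      rw [hb'.2.1]
      apply propext
      refine and_congr_left fun hk => ?_
      constructor
      · rintro ⟨-, h, -⟩; rwa [hb'.2.1] at h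
      · intro h
        refine ⟨hb'.1, by rwa [hb'.2.1], fun w => ?_⟩
        obtain ⟨i, hi⟩ := hb'.2.2 w
        rcases Bpart4_two b j c i h with h' | h'
        · left; exact ((hb'.2.1 _ _).2 h').trans hi.symm
        · right; exact ((hb'.2.1 _ _).2 h').trans hi.symm
    · intro b' _ hne
      rw [if_neg (c := IsCompatibleForest G v (Bpart4 b') F), mul_zero]
      intro h
      apply hne
      apply Bpart4_unique
      intro i i'
      rw [← ((hc b').1 h).2.1, ← hb'.2.1]
    · simp
  · have hz : ∀ b, ¬ IsCompatibleForest G v (Bpart4 b) F := fun b hb => hex ⟨b, hb⟩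
    simp only [hz, if_false, mul_zero, Finset.sum_const_zero]
    rw [if_neg]
    rintro ⟨⟨h1, h2, h3⟩, -⟩
    obtain ⟨b, hb⟩ := Bpart4_exists (Finset.univ.filter fun i => RR F (v j) (v i)) j c
      (by simp [RR.refl]) (by simp [h2])
    apply hz b
    rw [hc]
    refine ⟨h1, fun i i' => ?_, fun w => ?_⟩
    · rw [hb]
      simp only [Finset.mem_filter, Finset.mem_univ, true_and]
      constructor
      · intro h; exact ⟨fun h' => h'.trans h, fun h' => h'.trans h.symm⟩
      · intro h
        by_cases h' : RR F (v j) (v i)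
        · exact h'.symm.trans (h.1 h')
        · have h'' : ¬ RR F (v j) (v i') := fun q => h' (h.2 q)
          exact ((h3 (v i)).resolve_left h').symm.trans ((h3 (v i')).resolve_left h'')
    · rcases h3 w with h | h
      · exact ⟨j, h.symm⟩
      · exact ⟨c, h.symm⟩

/-- The coefficients of the exchange identity. -/
def coefN (j c : Fin 4) (q : Fin 6 × Fin 7) : ℕ :=
  ∑ k : Fin 4, if j ≠ k ∧ Apart4 q.1 j = Apart4 q.1 k ∧ Bpart4 q.2 j ≠ Bpart4 q.2 c ∧
    Bpart4 q.2 j ≠ Bpart4 q.2 k then 1 else 0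

open Classical in
theorem eval_coefN {V : Type*} [Fintype V] [DecidableEq V] (G : SimpleGraph V)
    [DecidableRel G.Adj] (x : Sym2 V → ℚ) (v : Fin 4 → V) (j c : Fin 4) (hjc : j ≠ c) :
    ∑ q : Fin 6 × Fin 7, (coefN j c q : ℚ) *
      (forestPoly G x v (Apart4 q.1) * forestPoly G x v (Bpart4 q.2)) =
    (∑ F ∈ G.edgeFinset.powerset, if PTree (v 0) F then ∏ e ∈ G.edgeFinset \ F, x e else 0) *
      (∑ F ∈ G.edgeFinset.powerset, if PFour v F then ∏ e ∈ G.edgeFinset \ F, x e else 0) := by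
  have hnd : ∀ u w : V, s(u, w) ∈ G.edgeFinset → u ≠ w := by
    intro u w h
    rw [SimpleGraph.mem_edgeFinset, SimpleGraph.mem_edgeSet] at h
    exact h.ne
  have htree : ∀ F : Finset (Sym2 V), PTree (v 0) F ↔ PTree (v j) F := by
    intro F
    constructor
    · rintro ⟨h1, h2⟩; exact ⟨h1, fun w => (h2 (v j)).symm.trans (h2 w)⟩
    · rintro ⟨h1, h2⟩; exact ⟨h1, fun w => (h2 (v 0)).symm.trans (h2 w)⟩
  have hid := exchange_identity G.edgeFinset hnd x v j c hjc
  have hA : ∀ k, j ≠ k → (∑ F ∈ G.edgeFinset.powerset,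
      if PThree v j k F then ∏ e ∈ G.edgeFinset \ F, x e else 0) =
      ∑ a : Fin 6, (if Apart4 a j = Apart4 a k then (1 : ℚ) else 0) *
        forestPoly G x v (Apart4 a) := by
    intro k hk
    simp only [forestPoly_eq, Finset.mul_sum]
    rw [Finset.sum_comm]
    refine Finset.sum_congr rfl fun F hF => ?_
    have h := three_sum G v j k hk F (Finset.mem_powerset.1 hF)
    simp only [← mul_assoc]
    rw [← Finset.sum_mul, ← h, ite_mul, one_mul, zero_mul]
  have hB : ∀ k, (∑ F ∈ G.edgeFinset.powerset,
      if PTwo (v j) (v c) F ∧ ¬ RR F (v j) (v k) then ∏ e ∈ G.edgeFinset \ F, x e else 0) =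
      ∑ b : Fin 7, (if Bpart4 b j ≠ Bpart4 b c ∧ Bpart4 b j ≠ Bpart4 b k then (1 : ℚ) else 0) *
        forestPoly G x v (Bpart4 b) := by
    intro k
    simp only [forestPoly_eq, Finset.mul_sum]
    rw [Finset.sum_comm]
    refine Finset.sum_congr rfl fun F hF => ?_
    have h := two_sum G v j c k F (Finset.mem_powerset.1 hF)
    simp only [← mul_assoc]
    rw [← Finset.sum_mul, ← h, ite_mul, one_mul, zero_mul]
  simp only [htree]
  have hfin : (∑ q : Fin 6 × Fin 7, (coefN j c q : ℚ) *
      (forestPoly G x v (Apart4 q.1) * forestPoly G x v (Bpart4 q.2))) =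
      ∑ k : Fin 4, if j ≠ k then
      (∑ F ∈ G.edgeFinset.powerset, if PThree v j k F then ∏ e ∈ G.edgeFinset \ F, x e else 0) *
      (∑ F ∈ G.edgeFinset.powerset, if PTwo (v j) (v c) F ∧ ¬ RR F (v j) (v k) then
        ∏ e ∈ G.edgeFinset \ F, x e else 0) else 0 := by
    unfold coefN
    push_cast
    conv_lhs => simp only [Finset.sum_mul]
    rw [Finset.sum_comm]
    refine Finset.sum_congr rfl fun k _ => ?_
    by_cases hk : j ≠ k
    · rw [if_pos hk, hA k hk, hB k, Finset.sum_mul_sum, Fintype.sum_prod_type]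
      refine Finset.sum_congr rfl fun a _ => Finset.sum_congr rfl fun b _ => ?_
      by_cases h1 : Apart4 a j = Apart4 a k <;>
        by_cases h2 : Bpart4 b j ≠ Bpart4 b c ∧ Bpart4 b j ≠ Bpart4 b k <;>
        simp [h1, h2, hk]
    · rw [if_neg hk]
      refine Finset.sum_eq_zero fun q _ => ?_
      rw [if_neg (fun h => hk h.1), zero_mul]
  rw [hfin]
  convert hid.symm

theorem mkAB_coefN : ∀ (l : List (Fin 6 × Fin 7)) (j c : Fin 4),
    (∀ q, l.count q = coefN j c q) → mkAB l = fun q => (coefN j c q : ℚ) := by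
  intro l j c h
  funext q
  simp only [mkAB, h]

theorem L441_eq : L441 = fun q => (coefN 0 3 q : ℚ) := mkAB_coefN _ _ _ (by decide +kernel)
theorem L442_eq : L442 = fun q => (coefN 1 3 q : ℚ) := mkAB_coefN _ _ _ (by decide +kernel)
theorem L443_eq : L443 = fun q => (coefN 2 3 q : ℚ) := mkAB_coefN _ _ _ (by decide +kernel)
theorem L431_eq : L431 = fun q => (coefN 0 2 q : ℚ) := mkAB_coefN _ _ _ (by decide +kernel)
theorem L432_eq : L432 = fun q => (coefN 1 2 q : ℚ) := mkAB_coefN _ _ _ (by decide +kernel)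
theorem L421_eq : L421 = fun q => (coefN 0 1 q : ℚ) := mkAB_coefN _ _ _ (by decide +kernel)
theorem L422_eq : L422 = fun q => (coefN 2 1 q : ℚ) := mkAB_coefN _ _ _ (by decide +kernel)
theorem L411_eq : L411 = fun q => (coefN 1 0 q : ℚ) := mkAB_coefN _ _ _ (by decide +kernel)
theorem L412_eq : L412 = fun q => (coefN 2 0 q : ℚ) := mkAB_coefN _ _ _ (by decide +kernel)

theorem memX4_sub (M N : Fin 6 × Fin 7 → ℚ) (j c j' c' : Fin 4) (h : j ≠ c) (h' : j' ≠ c')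
    (hM : M = fun q => (coefN j c q : ℚ)) (hN : N = fun q => (coefN j' c' q : ℚ)) :
    MemX4 (M - N) := by
  intro V _ _ G _ x v _
  subst hM hN
  simp only [Pi.sub_apply, sub_mul, Finset.sum_sub_distrib]
  rw [eval_coefN G x v j c h, eval_coefN G x v j' c' h', sub_self]

theorem memX4_of_span (basis : Fin 8 → (Fin 6 × Fin 7 → ℚ)) (hb : ∀ i, MemX4 (basis i))
    (α : Fin 6 × Fin 7 → ℚ) (h : α ∈ Submodule.span ℚ (Set.range basis)) : MemX4 α := by
  induction h using Submodule.span_induction with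
  | mem y hy => obtain ⟨i, rfl⟩ := hy; exact hb i
  | zero => intro V _ _ G _ x v _; simp
  | add y z _ _ hy hz =>
    intro V _ _ G _ x v hv
    have h1 := hy V G x v hv
    have h2 := hz V G x v hv
    simp only [Pi.add_apply, add_mul, Finset.sum_add_distrib]
    rw [h1, h2, add_zero]
  | smul r y _ hy =>
    intro V _ _ G _ x v hv
    have h1 := hy V G x v hv
    simp only [Pi.smul_apply, smul_eq_mul, mul_assoc]
    rw [← Finset.mul_sum, h1, mul_zero]

end Soundness

/-! ### Evaluation on the complete graph on four vertices -/

section CompleteFour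

/-- Component labelling of the graph with the given list of edges; `none` if there is a cycle. -/
def uf : List (Fin 4 × Fin 4) → Option (Fin 4 → Fin 4)
  | [] => some id
  | d :: l =>
    match uf l with
    | none => none
    | some L => if L d.1 = L d.2 then none else some (fun z => if L z = L d.2 then L d.1 else L z)

/-- The set of undirected edges of a list of pairs. -/
def toE (l : List (Fin 4 × Fin 4)) : Finset (Sym2 (Fin 4)) :=
  (l.map fun d => s(d.1, d.2)).toFinset

theorem toE_cons (d : Fin 4 × Fin 4) (l : List (Fin 4 × Fin 4)) :
    toE (d :: l) = insert s(d.1, d.2) (toE l) := by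
  simp [toE]

theorem uf_spec (l : List (Fin 4 × Fin 4)) (hn : (l.map fun d => s(d.1, d.2)).Nodup)
    (hd : ∀ d ∈ l, d.1 ≠ d.2) :
    (uf l = none → ¬ AC (toE l)) ∧
      ∀ L, uf l = some L → AC (toE l) ∧ ∀ a b, RR (toE l) a b ↔ L a = L b := by
  induction l with
  | nil =>
    refine ⟨fun h => by simp [uf] at h, fun L hL => ?_⟩
    simp only [uf, Option.some.injEq] at hL
    subst hL
    have h0 : SimpleGraph.fromEdgeSet ((toE [] : Finset (Sym2 (Fin 4))) : Set (Sym2 (Fin 4))) = ⊥ := by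
      simp [toE]
    unfold AC RR
    rw [h0]
    refine ⟨SimpleGraph.isAcyclic_bot, fun a b => ?_⟩
    simp
  | cons d l ih =>
    rw [List.map_cons, List.nodup_cons] at hn
    obtain ⟨ih1, ih2⟩ := ih hn.2 (fun e he => hd e (List.mem_cons_of_mem _ he))
    have hne : d.1 ≠ d.2 := hd d List.mem_cons_self
    have hnot : s(d.1, d.2) ∉ toE l := by
      unfold toE
      rw [List.mem_toFinset]
      exact hn.1
    have ha : AC (toE (d :: l)) ↔ AC (toE l) ∧ ¬ RR (toE l) d.1 d.2 := by
      have := acyc_insert (toE l) d.1 d.2 hne hnot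
      rw [toE_cons]
      unfold AC RR
      convert this using 1
      congr!
    have hr : ∀ a b, RR (toE (d :: l)) a b ↔ (RR (toE l) a b ∨ (RR (toE l) a d.1 ∧ RR (toE l) d.2 b)
        ∨ (RR (toE l) a d.2 ∧ RR (toE l) d.1 b)) := by
      intro a b
      have := reach_insert (toE l) d.1 d.2 a b
      rw [toE_cons]
      unfold RR
      convert this using 1
      congr!
    rcases hu : uf l with _ | L
    · refine ⟨fun _ h => ih1 hu (ha.1 h).1, fun L hL => ?_⟩
      simp [uf, hu] at hL
    · obtain ⟨h1, h2⟩ := ih2 L hu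
      by_cases hL : L d.1 = L d.2
      · refine ⟨fun _ h => (ha.1 h).2 ((h2 _ _).2 hL), fun L' hL' => ?_⟩
        simp [uf, hu, hL] at hL'
      · refine ⟨fun h => ?_, fun L' hL' => ?_⟩
        · simp [uf, hu, hL] at h
        · simp only [uf, hu, hL, if_false, Option.some.injEq] at hL'
          subst hL'
          refine ⟨ha.2 ⟨h1, fun h => hL ((h2 _ _).1 h)⟩, fun a b => ?_⟩
          rw [hr]
          simp only [h2]
          split_ifs <;> grind

/-- Decision procedure for compatibility on four vertices. -/
def chk (p : Fin 4 → Option ℕ) (l : List (Fin 4 × Fin 4)) : Bool :=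
  match uf l with
  | none => false
  | some L => decide (∀ i j, L i = L j ↔ p i = p j)

/-- The six edges of the complete graph. -/
def ed : List (Fin 4 × Fin 4) := [(0, 1), (0, 2), (0, 3), (1, 2), (1, 3), (2, 3)]

theorem toE_ed : (⊤ : SimpleGraph (Fin 4)).edgeFinset = toE ed := by decide +kernel

theorem chk_iff (p : Fin 4 → Option ℕ) (hp : ∀ i, p i ≠ none) (l : List (Fin 4 × Fin 4))
    (hl : l.Sublist ed) :
    IsCompatibleForest (⊤ : SimpleGraph (Fin 4)) id p (toE l) ↔ chk p l = true := by
  have hsub : toE l ⊆ (⊤ : SimpleGraph (Fin 4)).edgeFinset := by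
    rw [toE_ed]
    intro e he
    simp only [toE, List.mem_toFinset] at he ⊢
    exact (hl.map _).subset he
  have hn : (l.map fun d => s(d.1, d.2)).Nodup :=
    List.Nodup.sublist (hl.map _) (by decide)
  have hd : ∀ d ∈ l, d.1 ≠ d.2 := by
    intro d h
    have : ∀ d ∈ ed, d.1 ≠ d.2 := by decide
    exact this d (hl.subset h)
  obtain ⟨h1, h2⟩ := uf_spec l hn hd
  rw [compat_iff _ _ p hp _ hsub]
  unfold chk
  rcases hu : uf l with _ | L
  · simp [h1 hu]
  · obtain ⟨h3, h4⟩ := h2 L hu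
    simp only [h3, h4, id, true_and, decide_eq_true_eq, and_iff_left_iff_imp]
    intro _ w
    exact ⟨w, rfl⟩

theorem sum_powerset_toE (l : List (Fin 4 × Fin 4)) (hn : (l.map fun d => s(d.1, d.2)).Nodup)
    (g : Finset (Sym2 (Fin 4)) → ℚ) :
    ∑ F ∈ (toE l).powerset, g F = (l.sublists'.map fun s => g (toE s)).sum := by
  induction l generalizing g with
  | nil => simp [toE]
  | cons d l ih =>
    rw [List.map_cons, List.nodup_cons] at hn
    have hnot : s(d.1, d.2) ∉ toE l := by
      unfold toE
      rw [List.mem_toFinset]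
      exact hn.1
    rw [toE_cons, Finset.sum_powerset_insert hnot, ih hn.2, ih hn.2, List.sublists'_cons,
      List.map_append, List.sum_append, List.map_map]
    simp only [Function.comp_def, toE_cons]

theorem prod_compl (l : List (Fin 4 × Fin 4)) (hl : l.Sublist ed) (x : Sym2 (Fin 4) → ℚ)
    (hx : ∀ e, x e ≠ 0) :
    ∏ e ∈ toE ed \ toE l, x e = (∏ e ∈ toE ed, x e) * (l.map fun d => (x s(d.1, d.2))⁻¹).prod := by
  have hsub : toE l ⊆ toE ed := by
    intro e he
    simp only [toE, List.mem_toFinset] at he ⊢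
    exact (hl.map _).subset he
  have hn : (l.map fun d => s(d.1, d.2)).Nodup :=
    List.Nodup.sublist (hl.map _) (by decide)
  have h1 : ∏ e ∈ toE l, x e = (l.map fun d => x s(d.1, d.2)).prod := by
    unfold toE
    rw [List.prod_toFinset _ hn, List.map_map]
    rfl
  have h2 : (l.map fun d => (x s(d.1, d.2))⁻¹).prod = (∏ e ∈ toE l, x e)⁻¹ := by
    rw [h1]
    clear h1 hn hsub hl
    induction l with
    | nil => simp
    | cons d l ih => simp [ih, mul_comm]
  rw [h2, ← Finset.prod_sdiff hsub, mul_assoc, mul_inv_cancel₀, mul_one]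
  exact Finset.prod_ne_zero_iff.2 fun e _ => hx e

theorem sum_map_ite (l : List (List (Fin 4 × Fin 4))) (c : List (Fin 4 × Fin 4) → Bool)
    (g : List (Fin 4 × Fin 4) → ℚ) :
    (l.map fun s => if c s = true then g s else 0).sum = ((l.filter c).map g).sum := by
  induction l with
  | nil => simp
  | cons a l ih =>
    by_cases h : c a = true
    · simp [h, ih]
    · simp [h, ih]

theorem forestPoly_K4 (x : Sym2 (Fin 4) → ℚ) (hx : ∀ e, x e ≠ 0) (p : Fin 4 → Option ℕ)
    (hp : ∀ i, p i ≠ none) :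
    forestPoly (⊤ : SimpleGraph (Fin 4)) x id p = (∏ e ∈ toE ed, x e) *
      ((ed.sublists'.filter (chk p)).map
        fun l => (l.map fun d => (x s(d.1, d.2))⁻¹).prod).sum := by
  unfold forestPoly
  rw [toE_ed, sum_powerset_toE ed (by decide), ← sum_map_ite, ← List.sum_map_mul_left]
  congr 1
  apply List.map_congr_left
  intro l hl
  rw [List.mem_sublists'] at hl
  by_cases h : chk p l = true
  · have h' := (chk_iff p hp l hl).2 h
    simp only [h, h', if_true]
    exact prod_compl l hl x hx
  · have h' := mt (chk_iff p hp l hl).1 h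
    simp only [h, h', if_false, mul_zero]
    simp

/-- Forests on the complete graph compatible with the 3-part partitions. -/
def listA : Fin 6 → List (List (Fin 4 × Fin 4)) :=
  ![[[(0, 1)]], [[(0, 2)]], [[(1, 2)]], [[(0, 3)]], [[(1, 3)]], [[(2, 3)]]]

/-- Forests on the complete graph compatible with the 2-part partitions. -/
def listB : Fin 7 → List (List (Fin 4 × Fin 4)) :=
  ![[[(0, 2), (1, 2)], [(0, 1), (1, 2)], [(0, 1), (0, 2)]],
    [[(0, 3), (1, 3)], [(0, 1), (1, 3)], [(0, 1), (0, 3)]],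
    [[(0, 3), (2, 3)], [(0, 2), (2, 3)], [(0, 2), (0, 3)]],
    [[(1, 3), (2, 3)], [(1, 2), (2, 3)], [(1, 2), (1, 3)]],
    [[(0, 1), (2, 3)]], [[(0, 2), (1, 3)]], [[(0, 3), (1, 2)]]]

theorem filterA : ∀ a, ed.sublists'.filter (chk (Apart4 a)) = listA a := by decide +kernel

theorem filterB : ∀ b, ed.sublists'.filter (chk (Bpart4 b)) = listB b := by decide +kernel

/-- The polynomials of the 3-part partitions in the inverse edge variables. -/
def polA (y : Fin 6 → ℚ) : Fin 6 → ℚ := ![y 0, y 1, y 3, y 2, y 4, y 5]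

/-- The polynomials of the 2-part partitions in the inverse edge variables. -/
def polB (y : Fin 6 → ℚ) : Fin 7 → ℚ :=
  ![y 1 * y 3 + y 0 * y 3 + y 0 * y 1, y 2 * y 4 + y 0 * y 4 + y 0 * y 2,
    y 2 * y 5 + y 1 * y 5 + y 1 * y 2, y 4 * y 5 + y 3 * y 5 + y 3 * y 4,
    y 0 * y 5, y 1 * y 4, y 2 * y 3]

theorem eval_nonzero (α : Fin 6 × Fin 7 → ℚ) (h : MemX4 α) (y : Fin 6 → ℚ) (hy : ∀ i, y i ≠ 0) :
    ∑ q : Fin 6 × Fin 7, α q * (polA y q.1 * polB y q.2) = 0 := by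
  let x : Sym2 (Fin 4) → ℚ := fun e =>
    if e = s(0, 1) then (y 0)⁻¹ else if e = s(0, 2) then (y 1)⁻¹ else
    if e = s(0, 3) then (y 2)⁻¹ else if e = s(1, 2) then (y 3)⁻¹ else
    if e = s(1, 3) then (y 4)⁻¹ else (y 5)⁻¹
  have hx : ∀ e, x e ≠ 0 := by
    intro e
    simp only [x]
    split_ifs <;> exact inv_ne_zero (hy _)
  have x0 : x s(0, 1) = (y 0)⁻¹ := rfl
  have x1 : x s(0, 2) = (y 1)⁻¹ := rfl
  have x2 : x s(0, 3) = (y 2)⁻¹ := rfl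
  have x3 : x s(1, 2) = (y 3)⁻¹ := rfl
  have x4 : x s(1, 3) = (y 4)⁻¹ := rfl
  have x5 : x s(2, 3) = (y 5)⁻¹ := rfl
  have hA : ∀ a, forestPoly (⊤ : SimpleGraph (Fin 4)) x id (Apart4 a) =
      (∏ e ∈ toE ed, x e) * polA y a := by
    intro a
    rw [forestPoly_K4 x hx _ (Apart4_ne_none a), filterA]
    congr 1
    fin_cases a <;> simp [listA, polA, x0, x1, x2, x3, x4, x5]
  have hB : ∀ b, forestPoly (⊤ : SimpleGraph (Fin 4)) x id (Bpart4 b) =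
      (∏ e ∈ toE ed, x e) * polB y b := by
    intro b
    rw [forestPoly_K4 x hx _ (Bpart4_ne_none b), filterB]
    congr 1
    fin_cases b <;> simp [listB, polB, x0, x1, x2, x3, x4, x5, add_assoc]
  have h1 := h (Fin 4) ⊤ x id Function.injective_id
  have hne : (∏ e ∈ toE ed, x e) ≠ 0 := Finset.prod_ne_zero_iff.2 fun e _ => hx e
  have h2 : (∏ e ∈ toE ed, x e) ^ 2 *
      ∑ q : Fin 6 × Fin 7, α q * (polA y q.1 * polB y q.2) = 0 := by
    rw [← h1, Finset.mul_sum]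
    refine Finset.sum_congr rfl fun q _ => ?_
    rw [hA, hB]
    ring
  exact (mul_eq_zero.1 h2).resolve_left (pow_ne_zero 2 hne)

theorem eval_all (α : Fin 6 × Fin 7 → ℚ) (h : MemX4 α) (y : Fin 6 → ℚ) :
    ∑ q : Fin 6 × Fin 7, α q * (polA y q.1 * polB y q.2) = 0 := by
  have hcA : ∀ a, Continuous fun y : Fin 6 → ℚ => polA y a := by
    intro a
    fin_cases a <;> simp only [polA] <;> simp <;> fun_prop
  have hcB : ∀ b, Continuous fun y : Fin 6 → ℚ => polB y b := by
    intro b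
    fin_cases b <;> simp only [polB] <;> simp <;> fun_prop
  have hc : Continuous fun y : Fin 6 → ℚ =>
      ∑ q : Fin 6 × Fin 7, α q * (polA y q.1 * polB y q.2) :=
    continuous_finsetSum _ fun q _ => continuous_const.mul ((hcA _).mul (hcB _))
  have hd : Dense (Set.pi Set.univ fun _ : Fin 6 => ({0}ᶜ : Set ℚ)) :=
    dense_pi _ fun i _ => dense_compl_singleton 0
  have heq := Continuous.ext_on hd hc (continuous_const (y := (0 : ℚ)))
    (fun y hy => eval_nonzero α h y fun i => hy i (Set.mem_univ i))
  exact congrFun heq y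

end CompleteFour

/-- The explicit expansion of the evaluation on the complete graph. -/
theorem eval_explicit (α : Fin 6 × Fin 7 → ℚ) (h : MemX4 α) (y0 y1 y2 y3 y4 y5 : ℚ) :
    y0 * (α (0, 0) * (y1 * y3 + y0 * y3 + y0 * y1) + α (0, 1) * (y2 * y4 + y0 * y4 + y0 * y2) + α (0, 2) * (y2 * y5 + y1 * y5 + y1 * y2) + α (0, 3) * (y4 * y5 + y3 * y5 + y3 * y4) + α (0, 4) * (y0 * y5) + α (0, 5) * (y1 * y4) + α (0, 6) * (y2 * y3)) +
    y1 * (α (1, 0) * (y1 * y3 + y0 * y3 + y0 * y1) + α (1, 1) * (y2 * y4 + y0 * y4 + y0 * y2) + α (1, 2) * (y2 * y5 + y1 * y5 + y1 * y2) + α (1, 3) * (y4 * y5 + y3 * y5 + y3 * y4) + α (1, 4) * (y0 * y5) + α (1, 5) * (y1 * y4) + α (1, 6) * (y2 * y3)) +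
    y3 * (α (2, 0) * (y1 * y3 + y0 * y3 + y0 * y1) + α (2, 1) * (y2 * y4 + y0 * y4 + y0 * y2) + α (2, 2) * (y2 * y5 + y1 * y5 + y1 * y2) + α (2, 3) * (y4 * y5 + y3 * y5 + y3 * y4) + α (2, 4) * (y0 * y5) + α (2, 5) * (y1 * y4) + α (2, 6) * (y2 * y3)) +
    y2 * (α (3, 0) * (y1 * y3 + y0 * y3 + y0 * y1) + α (3, 1) * (y2 * y4 + y0 * y4 + y0 * y2) + α (3, 2) * (y2 * y5 + y1 * y5 + y1 * y2) + α (3, 3) * (y4 * y5 + y3 * y5 + y3 * y4) + α (3, 4) * (y0 * y5) + α (3, 5) * (y1 * y4) + α (3, 6) * (y2 * y3)) +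
    y4 * (α (4, 0) * (y1 * y3 + y0 * y3 + y0 * y1) + α (4, 1) * (y2 * y4 + y0 * y4 + y0 * y2) + α (4, 2) * (y2 * y5 + y1 * y5 + y1 * y2) + α (4, 3) * (y4 * y5 + y3 * y5 + y3 * y4) + α (4, 4) * (y0 * y5) + α (4, 5) * (y1 * y4) + α (4, 6) * (y2 * y3)) +
    y5 * (α (5, 0) * (y1 * y3 + y0 * y3 + y0 * y1) + α (5, 1) * (y2 * y4 + y0 * y4 + y0 * y2) + α (5, 2) * (y2 * y5 + y1 * y5 + y1 * y2) + α (5, 3) * (y4 * y5 + y3 * y5 + y3 * y4) + α (5, 4) * (y0 * y5) + α (5, 5) * (y1 * y4) + α (5, 6) * (y2 * y3)) = 0 := by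
  have H := eval_all α h ![y0, y1, y2, y3, y4, y5]
  rw [Fintype.sum_prod_type] at H
  simp only [Fin.sum_univ_succ, polA, polB, Fin.sum_univ_zero] at H
  simp at H
  linear_combination H

theorem coef_zero (α : Fin 6 × Fin 7 → ℚ) (h : MemX4 α) :
    α (0, 0) = 0 ∧ α (0, 1) = 0 ∧ α (0, 4) = 0 ∧ α (1, 0) = 0 ∧ α (1, 2) = 0 ∧ α (1, 5) = 0 ∧ α (2, 0) = 0 ∧ α (2, 3) = 0 ∧ α (2, 6) = 0 ∧ α (3, 1) = 0 ∧ α (3, 2) = 0 ∧ α (3, 6) = 0 ∧ α (4, 1) = 0 ∧ α (4, 3) = 0 ∧ α (4, 5) = 0 ∧ α (5, 2) = 0 ∧ α (5, 3) = 0 ∧ α (5, 4) = 0 := by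
  have H := eval_explicit α h
  refine ⟨?_, ?_, ?_, ?_, ?_, ?_, ?_, ?_, ?_, ?_, ?_, ?_, ?_, ?_, ?_, ?_, ?_, ?_⟩
  · linarith [H 1 0 0 1 0 0, H 1 0 0 (-1) 0 0]
  · linarith [H 1 0 0 0 1 0, H 1 0 0 0 (-1) 0]
  · linarith [H 1 0 0 0 0 1, H 1 0 0 0 0 (-1)]
  · linarith [H 0 1 0 1 0 0, H 0 1 0 (-1) 0 0]
  · linarith [H 0 1 0 0 0 1, H 0 1 0 0 0 (-1)]
  · linarith [H 0 1 0 0 1 0, H 0 1 0 0 (-1) 0]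
  · linarith [H 0 1 0 1 0 0, H 0 (-1) 0 1 0 0]
  · linarith [H 0 0 0 1 0 1, H 0 0 0 1 0 (-1)]
  · linarith [H 0 0 1 1 0 0, H 0 0 (-1) 1 0 0]
  · linarith [H 0 0 1 0 1 0, H 0 0 1 0 (-1) 0]
  · linarith [H 0 0 1 0 0 1, H 0 0 1 0 0 (-1)]
  · linarith [H 0 0 1 1 0 0, H 0 0 1 (-1) 0 0]
  · linarith [H 0 0 1 0 1 0, H 0 0 (-1) 0 1 0]
  · linarith [H 0 0 0 0 1 1, H 0 0 0 0 1 (-1)]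
  · linarith [H 0 1 0 0 1 0, H 0 (-1) 0 0 1 0]
  · linarith [H 0 0 1 0 0 1, H 0 0 (-1) 0 0 1]
  · linarith [H 0 0 0 0 1 1, H 0 0 0 0 (-1) 1]
  · linarith [H 1 0 0 0 0 1, H (-1) 0 0 0 0 1]

theorem coef_three (α : Fin 6 × Fin 7 → ℚ) (h : MemX4 α) :
    α (0, 2) + α (1, 1) + α (3, 0) = 0 ∧
    α (0, 5) + α (1, 1) + α (4, 0) = 0 ∧
    α (0, 2) + α (1, 4) + α (5, 0) = 0 ∧
    α (0, 6) + α (2, 1) + α (3, 0) = 0 ∧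
    α (0, 2) + α (3, 4) + α (5, 1) = 0 ∧
    α (0, 3) + α (2, 1) + α (4, 0) = 0 ∧
    α (0, 3) + α (2, 4) + α (5, 0) = 0 ∧
    α (0, 3) + α (4, 4) + α (5, 1) = 0 ∧
    α (1, 6) + α (2, 2) + α (3, 0) = 0 ∧
    α (1, 1) + α (3, 5) + α (4, 2) = 0 ∧
    α (1, 3) + α (2, 5) + α (4, 0) = 0 ∧
    α (1, 3) + α (2, 2) + α (5, 0) = 0 ∧
    α (1, 3) + α (4, 2) + α (5, 5) = 0 ∧
    α (2, 1) + α (3, 3) + α (4, 6) = 0 ∧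
    α (2, 2) + α (3, 3) + α (5, 6) = 0 ∧
    α (3, 3) + α (4, 2) + α (5, 1) = 0 := by
  have H := eval_explicit α h
  obtain ⟨z00, z01, z04, z10, z12, z15, z20, z23, z26, z31, z32, z36, z41, z43, z45, z52, z53, z54⟩ := coef_zero α h
  refine ⟨?_, ?_, ?_, ?_, ?_, ?_, ?_, ?_, ?_, ?_, ?_, ?_, ?_, ?_, ?_, ?_⟩
  · linarith [H 1 1 1 0 0 0]
  · linarith [H 1 1 0 0 1 0]
  · linarith [H 1 1 0 0 0 1]
  · linarith [H 1 0 1 1 0 0]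
  · linarith [H 1 0 1 0 0 1]
  · linarith [H 1 0 0 1 1 0]
  · linarith [H 1 0 0 1 0 1]
  · linarith [H 1 0 0 0 1 1]
  · linarith [H 0 1 1 1 0 0]
  · linarith [H 0 1 1 0 1 0]
  · linarith [H 0 1 0 1 1 0]
  · linarith [H 0 1 0 1 0 1]
  · linarith [H 0 1 0 0 1 1]
  · linarith [H 0 0 1 1 1 0]
  · linarith [H 0 0 1 1 0 1]
  · linarith [H 0 0 1 0 1 1]

set_option maxHeartbeats 4000000 in
theorem mem_span_of_memX4 (α : Fin 6 × Fin 7 → ℚ) (h : MemX4 α) :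
    α ∈ Submodule.span ℚ (Set.range
      (![L441 - L443, L442 - L443, L431 - L443, L432 - L443,
        L421 - L443, L422 - L443, L411 - L443, L412 - L443] : Fin 8 → (Fin 6 × Fin 7 → ℚ))) := by
  obtain ⟨z00, z01, z04, z10, z12, z15, z20, z23, z26, z31, z32, z36, z41, z43, z45, z52, z53, z54⟩ := coef_zero α h
  obtain ⟨t012, t014, t015, t023, t025, t034, t035, t045, t123, t124, t134, t135, t145, t234, t235, t245⟩ := coef_three α h
  rw [Submodule.mem_span_range_iff_exists_fun]
  refine ⟨![
    α (3, 4) + α (3, 5) + α (4, 2) + α (5, 1),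
    (-1) * α (4, 2) + α (4, 4) + α (4, 6),
    (-1) * α (3, 5) + (-1) * α (4, 2) + (-1) * α (5, 1),
    α (4, 2) + (-1) * α (4, 6),
    (-1) * α (3, 4) + (-1) * α (4, 2) + (-1) * α (5, 1),
    α (5, 1) + (-1) * α (5, 6),
    α (4, 2) + (-1) * α (4, 4),
    α (5, 1) + (-1) * α (5, 5)], ?_⟩
  funext q
  rcases q with ⟨i, j⟩
  fin_cases i <;> fin_cases j <;>
    simp [L441, L442, L443, L431, L432, L421, L422, L411, L412, mkAB, List.count_cons,
      Fin.sum_univ_succ] <;> linarith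

theorem basis_indep :
    LinearIndependent ℚ (![L441 - L443, L442 - L443, L431 - L443, L432 - L443,
        L421 - L443, L422 - L443, L411 - L443, L412 - L443] : Fin 8 → (Fin 6 × Fin 7 → ℚ)) := by
  rw [Fintype.linearIndependent_iff]
  intro g hg
  have h34 := congrFun hg (3, 4)
  have h35 := congrFun hg (3, 5)
  have h42 := congrFun hg (4, 2)
  have h44 := congrFun hg (4, 4)
  have h46 := congrFun hg (4, 6)
  have h51 := congrFun hg (5, 1)
  have h55 := congrFun hg (5, 5)
  have h56 := congrFun hg (5, 6)
  simp [L441, L442, L443, L431, L432, L421, L422, L411, L412, mkAB, List.count_cons,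
    Fin.sum_univ_succ] at h34 h35 h42 h44 h46 h51 h55 h56
  intro i
  fin_cases i <;> simp <;> linarith

/-- **`dim X₄ = 8 = 4·(4−2)`**, with explicit basis the eight differences
`L_{4,4}(1)−L_{4,4}(3)`, `L_{4,4}(2)−L_{4,4}(3)`, `L_{4,3}(1)−L_{4,4}(3)`,
`L_{4,3}(2)−L_{4,4}(3)`, `L_{4,2}(1)−L_{4,4}(3)`, `L_{4,2}(2)−L_{4,4}(3)`,
`L_{4,1}(1)−L_{4,4}(3)`, `L_{4,1}(2)−L_{4,4}(3)`: these are linearly independent and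
span exactly the space `X₄` of vanishing combinations. -/
theorem X4_dimension :
    let basis : Fin 8 → (Fin 6 × Fin 7 → ℚ) :=
      ![L441 - L443, L442 - L443, L431 - L443, L432 - L443,
        L421 - L443, L422 - L443, L411 - L443, L412 - L443]
    LinearIndependent ℚ basis ∧
      ∀ α : Fin 6 × Fin 7 → ℚ,
        MemX4 α ↔ α ∈ Submodule.span ℚ (Set.range basis) := by
  intro basis
  refine ⟨basis_indep, fun α => ⟨mem_span_of_memX4 α, memX4_of_span basis (fun i => ?_) α⟩⟩
  fin_cases i
  · exact memX4_sub L441 L443 0 3 2 3 (by decide) (by decide) L441_eq L443_eq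
  · exact memX4_sub L442 L443 1 3 2 3 (by decide) (by decide) L442_eq L443_eq
  · exact memX4_sub L431 L443 0 2 2 3 (by decide) (by decide) L431_eq L443_eq
  · exact memX4_sub L432 L443 1 2 2 3 (by decide) (by decide) L432_eq L443_eq
  · exact memX4_sub L421 L443 0 1 2 3 (by decide) (by decide) L421_eq L443_eq
  · exact memX4_sub L422 L443 2 1 2 3 (by decide) (by decide) L422_eq L443_eq
  · exact memX4_sub L411 L443 1 0 2 3 (by decide) (by decide) L411_eq L443_eq
  · exact memX4_sub L412 L443 2 0 2 3 (by decide) (by decide) L412_eq L443_eq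
end
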